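/- Let (U,ρ) be a complete metric space, let g ∈ W̃(ℝ,U), and let F ∈ W̃_1(ℝ, (cl U, dist_{ρ'})). Suppose that for every ε > 0 the set T(ε) := P^{(ρ')}_1(ε; g) ∩ P^{(dist_{ρ'})}_1(ε; F) is relatively dense. Then for every δ > 0 and every function h ∈ W_1(ℝ,ℝ) whose frequency module Mod h is dense and countable (for such h, the set T(ε) ∩ P^{(ρ_ℝ)}_1(ε; h) is relatively dense for all ε > 0), there exists a function f_δ ∈ W̃(ℝ,U) such that f_δ(t) ∈ F(t) a.e., ρ(f_δ(t), g(t)) < ρ(g(t), F(t)) + δ a.e. (where ρ(x,A) = inf_{y∈A} ρ(x,y)), and for every ε' > 0 there exists ε > 0 such that P^{(ρ')}_1(ε'; f_δ) ⊇ T(ε) ∩ P^{(ρ_ℝ)}_1(ε; h). -/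

import Mathlib

open MeasureTheory Filter Topology TopologicalSpace
open scoped ENNReal Pointwise

noncomputable section

/-- The truncated ("bounded") distance `ρ'(x,y) = min {1, ρ(x,y)}` on a metric space. -/
def bdist {α : Type*} [PseudoMetricSpace α] : α → α → ℝ := fun x y => min 1 (dist x y)

/-- The Hausdorff distance `dist_{ρ'}` (corresponding to the truncated metric `ρ'`)
between non-empty closed subsets of a metric space. -/
def clDist {α : Type*} [MetricSpace α] : Closeds α → Closeds α → ℝ :=
  fun A B => (min 1 (EMetric.hausdorffEdist (A : Set α) (B : Set α))).toReal

/-- The Hausdorff distance `dist_ρ` between (non-empty closed bounded) subsets. -/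
def clbDist {α : Type*} [MetricSpace α] : Closeds α → Closeds α → ℝ :=
  fun A B => Metric.hausdorffDist (A : Set α) (B : Set α)

/-- `D^{(d)}_{p,l}(f,g) = ( sup_ξ (1/l) ∫_ξ^{ξ+l} d(f t, g t)^p dt )^{1/p}`,
valued in `ℝ≥0∞`. -/
def weylD {α : Type*} (d : α → α → ℝ) (p l : ℝ) (f g : ℝ → α) : ℝ≥0∞ :=
  (⨆ ξ : ℝ, ENNReal.ofReal (1 / l) *
      ∫⁻ t in Set.Icc ξ (ξ + l), ENNReal.ofReal (d (f t) (g t) ^ p)) ^ (1 / p)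

/-- The Weyl semimetric `D^{(d)}_p(f,g) = lim_{l → +∞} D^{(d)}_{p,l}(f,g)`
(the limit exists; it is formalized here as a `limsup`). -/
def weylDinf {α : Type*} (d : α → α → ℝ) (p : ℝ) (f g : ℝ → α) : ℝ≥0∞ :=
  Filter.limsup (fun l => weylD d p l f g) Filter.atTop

/-- Membership in `M_p(ℝ, α)`: `f` is (strongly) measurable and
`sup_ξ ∫_ξ^{ξ+1} d(f t, x₀)^p dt < +∞`. -/
def MemMp {α : Type*} [TopologicalSpace α] (d : α → α → ℝ) (p : ℝ) (x₀ : α)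
    (f : ℝ → α) : Prop :=
  AEStronglyMeasurable f MeasureTheory.volume ∧
  ∃ C : ℝ, ∀ ξ : ℝ,
    (∫⁻ t in Set.Icc ξ (ξ + 1), ENNReal.ofReal (d (f t) x₀ ^ p)) ≤ ENNReal.ofReal C

/-- A set `T ⊆ ℝ` is relatively dense. -/
def RelDense (T : Set ℝ) : Prop := ∃ a > 0, ∀ ξ : ℝ, (Set.Icc ξ (ξ + a) ∩ T).Nonempty

/-- The set of `(ε, D^{(d)}_{p,l})`-almost periods of `f`. -/
def APeriodsL {α : Type*} (d : α → α → ℝ) (p l ε : ℝ) (f : ℝ → α) : Set ℝ :=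
  {τ | weylD d p l f (fun t => f (t + τ)) < ENNReal.ofReal ε}

/-- The set `P^{(d)}_p(ε; f)` of `(ε, D^{(d)}_p)`-almost periods of `f`. -/
def APeriods {α : Type*} (d : α → α → ℝ) (p ε : ℝ) (f : ℝ → α) : Set ℝ :=
  {τ | weylDinf d p f (fun t => f (t + τ)) < ENNReal.ofReal ε}

/-- Membership in the space `W_p(ℝ, α)` of Weyl almost periodic functions of order `p`
w.r.t. the distance `d` (with distinguished point `x₀`). -/
def MemWp {α : Type*} [TopologicalSpace α] (d : α → α → ℝ) (p : ℝ) (x₀ : α)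
    (f : ℝ → α) : Prop :=
  MemMp d p x₀ f ∧ ∀ ε > 0, ∃ l > 0, RelDense (APeriodsL d p l ε f)

/-- The module `Mod f`: the additive group of all `λ ∈ ℝ` such that `e^{iλτ_j} → 1`
for every `f`-returning sequence `{τ_j}` (a sequence with `D^{(d)}_1(f, f(·+τ_j)) → 0`,
where `d` is the relevant bounded distance). -/
def WMod {α : Type*} (d : α → α → ℝ) (f : ℝ → α) : Set ℝ :=
  {lam : ℝ | ∀ τ : ℕ → ℝ,
    Tendsto (fun j => weylDinf d 1 f (fun t => f (t + τ j))) atTop (nhds 0) →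
    Tendsto (fun j => Complex.exp (Complex.I * ((lam * τ j : ℝ) : ℂ))) atTop (nhds 1)}

/-- `κ_W(T) = lim_{l → +∞} sup_ξ (1/l) meas([ξ, ξ+l] ∩ T)` (formalized as a `limsup`). -/
def kappaW (T : Set ℝ) : ℝ≥0∞ :=
  Filter.limsup (fun l : ℝ => ⨆ ξ : ℝ,
    ENNReal.ofReal (1 / l) * MeasureTheory.volume (Set.Icc ξ (ξ + l) ∩ T)) Filter.atTop

/-- Membership in `M*_p(ℝ, α)`. -/
def MemMpStar {α : Type*} [TopologicalSpace α] (d : α → α → ℝ) (p : ℝ) (x₀ : α)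
    (f : ℝ → α) : Prop :=
  MemMp d p x₀ f ∧
  ∀ ε > 0, ∃ δ > 0, ∀ T : Set ℝ, MeasurableSet T → kappaW T < ENNReal.ofReal δ →
    Filter.limsup (fun l : ℝ => ⨆ ξ : ℝ, ENNReal.ofReal (1 / l) *
        ∫⁻ t in Set.Icc ξ (ξ + l) ∩ T, ENNReal.ofReal (d (f t) x₀ ^ p)) Filter.atTop
      < ENNReal.ofReal ε

/-- Distance from a point to a set w.r.t. the distance `d`, valued in `ℝ≥0∞`
(`∞` for the empty set). -/
def dInfDist {α : Type*} (d : α → α → ℝ) (x : α) (K : Set α) : ℝ≥0∞ :=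
  ⨅ y ∈ K, ENNReal.ofReal (d x y)

/-- Membership in `W̃_p(ℝ, α)`: conditions 1) (relatively dense sets of
`(ε, D^{(d)}_p)`-almost periods) and 2) (approximate compactness of values). -/
def MemWpTilde {α : Type*} [TopologicalSpace α] (d : α → α → ℝ) (p : ℝ) (x₀ : α)
    (f : ℝ → α) : Prop :=
  MemMp d p x₀ f ∧
  (∀ ε > 0, RelDense (APeriods d p ε f)) ∧
  (∀ ε > 0, ∀ δ > 0, ∃ K : Set α, IsCompact K ∧
      kappaW {t | ENNReal.ofReal ε ≤ dInfDist d (f t) K} < ENNReal.ofReal δ)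

/-- The support of a Borel measure on a topological space. -/
def measSupport {α : Type*} [TopologicalSpace α] [MeasurableSpace α]
    (μ : Measure α) : Set α :=
  {x | ∀ V : Set α, IsOpen V → x ∈ V → 0 < μ V}

/-- `r_δ(x, μ) = inf { r > 0 : μ[U_r(x)] > δ }`. -/
def rdelta {α : Type*} [PseudoMetricSpace α] [MeasurableSpace α]
    (x : α) (μ : Measure α) (δ : ℝ) : ℝ :=
  sInf {r : ℝ | 0 < r ∧ ENNReal.ofReal δ < μ (Metric.ball x r)}

/-- The Lévy–Prokhorov distance on Borel probability measures. -/
def lpDist {α : Type*} [MeasurableSpace α] [PseudoEMetricSpace α] :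
    ProbabilityMeasure α → ProbabilityMeasure α → ℝ :=
  fun μ ν => MeasureTheory.levyProkhorovDist (μ : Measure α) (ν : Measure α)

end



theorem limsup_add_le_aux (u v : ℝ → ℝ≥0∞) :
    limsup (fun l => u l + v l) atTop ≤ limsup u atTop + limsup v atTop := by
  by_cases htop : limsup u atTop + limsup v atTop = ⊤
  · rw [htop]; exact le_top
  have hu : limsup u atTop ≠ ⊤ := fun h => htop (by rw [h, top_add])
  have hv : limsup v atTop ≠ ⊤ := fun h => htop (by rw [h, add_top])
  apply ENNReal.le_of_forall_pos_le_add
  intro ε hε _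
  have hε2 : (ε / 2 : ℝ≥0∞) ≠ 0 := by simp [hε.ne']
  have h1 : ∀ᶠ l in atTop, u l < limsup u atTop + ε / 2 :=
    eventually_lt_of_limsup_lt (ENNReal.lt_add_right hu hε2)
  have h2 : ∀ᶠ l in atTop, v l < limsup v atTop + ε / 2 :=
    eventually_lt_of_limsup_lt (ENNReal.lt_add_right hv hε2)
  apply limsup_le_of_le
  · isBoundedDefault
  filter_upwards [h1, h2] with l h1 h2
  calc u l + v l ≤ (limsup u atTop + ε / 2) + (limsup v atTop + ε / 2) := add_le_add h1.le h2.le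
    _ = limsup u atTop + limsup v atTop + (ε / 2 + ε / 2) := by ring
    _ = _ := by rw [ENNReal.add_halves]

theorem kappaW_mono_ae {A B : Set ℝ} (hAB : ∀ᵐ t ∂(volume : Measure ℝ), t ∈ A → t ∈ B) :
    kappaW A ≤ kappaW B := by
  unfold kappaW
  apply limsup_le_limsup _ (by isBoundedDefault) (by isBoundedDefault)
  refine Eventually.of_forall fun l => ?_
  refine iSup_mono fun ξ => ?_
  refine mul_le_mul_right ?_ _
  apply measure_mono_ae
  filter_upwards [hAB] with t ht
  intro h
  exact ⟨h.1, ht h.2⟩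

theorem kappaW_mono {A B : Set ℝ} (hAB : A ⊆ B) : kappaW A ≤ kappaW B :=
  kappaW_mono_ae (Eventually.of_forall fun _ h => hAB h)

theorem kappaW_union_le (A B : Set ℝ) : kappaW (A ∪ B) ≤ kappaW A + kappaW B := by
  unfold kappaW
  refine le_trans ?_ (limsup_add_le_aux _ _)
  apply limsup_le_limsup _ (by isBoundedDefault) (by isBoundedDefault)
  refine Eventually.of_forall fun l => ?_
  refine iSup_le fun ξ => ?_
  refine le_trans ?_ (add_le_add (le_iSup (fun ξ : ℝ => ENNReal.ofReal (1 / l) *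
    volume (Set.Icc ξ (ξ + l) ∩ A)) ξ) (le_iSup (fun ξ : ℝ => ENNReal.ofReal (1 / l) *
    volume (Set.Icc ξ (ξ + l) ∩ B)) ξ))
  rw [← mul_add, Set.inter_union_distrib_left]
  gcongr
  exact measure_union_le _ _

theorem kappaW_le_add {A B C : Set ℝ} (hh : ∀ t ∈ A, t ∈ B ∨ t ∈ C) :
    kappaW A ≤ kappaW B + kappaW C :=
  (kappaW_mono (fun t ht => hh t ht)).trans (kappaW_union_le B C)

theorem kappaW_empty : kappaW ∅ = 0 := by
  unfold kappaW
  simp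

theorem kappaW_biUnion_le {ι : Type*} (s : Finset ι) (A : ι → Set ℝ) :
    kappaW (⋃ i ∈ s, A i) ≤ ∑ i ∈ s, kappaW (A i) := by
  classical
  induction s using Finset.induction_on with
  | empty => simp [kappaW_empty]
  | insert a s ha ih =>
    rw [Finset.sum_insert ha, Finset.set_biUnion_insert]
    exact (kappaW_union_le _ _).trans (add_le_add le_rfl ih)

theorem volume_Icc_inter_preimage (ξ l τ : ℝ) (A : Set ℝ) :
    volume (Set.Icc ξ (ξ + l) ∩ (fun t => t + τ) ⁻¹' A)
      = volume (Set.Icc (ξ + τ) (ξ + τ + l) ∩ A) := by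
  rw [← measure_preimage_add_right (volume : Measure ℝ) τ (Set.Icc (ξ + τ) (ξ + τ + l) ∩ A)]
  congr 1
  ext t
  simp only [Set.mem_inter_iff, Set.mem_Icc, Set.mem_preimage]
  constructor <;> rintro ⟨⟨h1, h2⟩, h3⟩ <;> refine ⟨⟨?_, ?_⟩, h3⟩ <;> linarith

theorem kappaW_preimage_le (A : Set ℝ) (τ : ℝ) :
    kappaW ((fun t => t + τ) ⁻¹' A) ≤ kappaW A := by
  unfold kappaW
  apply limsup_le_limsup _ (by isBoundedDefault) (by isBoundedDefault)
  refine Eventually.of_forall fun l => ?_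
  refine iSup_le fun ξ => ?_
  rw [volume_Icc_inter_preimage]
  exact le_iSup (fun ξ : ℝ => ENNReal.ofReal (1 / l) * volume (Set.Icc ξ (ξ + l) ∩ A)) (ξ + τ)

/-- Packing bound. -/
theorem kappaW_packing {N : ℕ} (hN : 0 < N) (B E : Set ℝ) (hB : MeasurableSet B)
    (hE : MeasurableSet E) (τ : Fin N → ℝ)
    (hdisj : ∀ i j, i ≠ j → ∀ t, t ∉ E → t + τ i ∈ B → t + τ j ∈ B → False) :
    kappaW B ≤ ENNReal.ofReal (1 / N) + kappaW E := by
  obtain ⟨R, hR0, hR⟩ : ∃ R : ℝ, 0 ≤ R ∧ ∀ j, |τ j| ≤ R :=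
    ⟨∑ j, |τ j|, Finset.sum_nonneg fun _ _ => abs_nonneg _, fun j =>
      Finset.single_le_sum (f := fun j => |τ j|) (fun _ _ => abs_nonneg _) (Finset.mem_univ j)⟩
  have hNr : (0 : ℝ) < N := by exact_mod_cast hN
  have key : ∀ l > (0:ℝ), ∀ ξ : ℝ, volume (Set.Icc ξ (ξ + l) ∩ B) ≤
      ENNReal.ofReal (l / N + (2 * R / N + 2 * R)) +
        volume (Set.Icc (ξ - R) (ξ - R + l) ∩ E) := by
    intro l hl ξ
    set J := Set.Icc (ξ - R) (ξ + l + R) with hJ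
    have hJE : volume (J ∩ E) ≤ volume (Set.Icc (ξ - R) (ξ - R + l) ∩ E) + ENNReal.ofReal (2 * R) := by
      have : J ∩ E ⊆ (Set.Icc (ξ - R) (ξ - R + l) ∩ E) ∪ Set.Icc (ξ - R + l) (ξ + l + R) := by
        rintro t ⟨⟨h1, h2⟩, h3⟩
        rcases le_total t (ξ - R + l) with h | h
        · exact Or.inl ⟨⟨h1, h⟩, h3⟩
        · exact Or.inr ⟨h, h2⟩
      refine (measure_mono this).trans ((measure_union_le _ _).trans ?_)
      gcongr
      rw [Real.volume_Icc]
      apply ENNReal.ofReal_le_ofReal; linarith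
    have hj : ∀ j, volume (Set.Icc ξ (ξ + l) ∩ B) ≤
        volume (J ∩ ((fun t => t + τ j) ⁻¹' B \ E)) + volume (J ∩ E) := by
      intro j
      rw [← measure_preimage_add_right (volume : Measure ℝ) (τ j) (Set.Icc ξ (ξ + l) ∩ B)]
      refine le_trans (measure_mono ?_) (measure_union_le _ _)
      rintro t ⟨⟨h1, h2⟩, h3⟩
      have := abs_le.1 (hR j)
      have htJ : t ∈ J := ⟨by linarith, by linarith⟩
      by_cases hE : t ∈ E
      · exact Or.inr ⟨htJ, hE⟩
      · exact Or.inl ⟨htJ, h3, hE⟩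
    have hsum : ∑ j, volume (J ∩ ((fun t => t + τ j) ⁻¹' B \ E)) ≤ ENNReal.ofReal (l + 2 * R) := by
      rw [← measure_biUnion_finset]
      · refine (measure_mono (t := J) ?_).trans ?_
        · exact Set.iUnion₂_subset fun j _ => Set.inter_subset_left
        · rw [hJ, Real.volume_Icc]; apply ENNReal.ofReal_le_ofReal; linarith
      · intro i _ j _ hij
        rw [Function.onFun, Set.disjoint_left]
        rintro t ⟨_, h1, h2⟩ ⟨_, h3, _⟩
        exact hdisj i j hij t h2 h1 h3
      · intro j _
        exact measurableSet_Icc.inter (((measurable_id.add_const (τ j)) hB).diff hE)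
    have htot : (N : ℝ≥0∞) * volume (Set.Icc ξ (ξ + l) ∩ B) ≤
        ENNReal.ofReal (l + 2 * R) + N * volume (J ∩ E) := by
      calc (N : ℝ≥0∞) * volume (Set.Icc ξ (ξ + l) ∩ B)
          = ∑ j : Fin N, volume (Set.Icc ξ (ξ + l) ∩ B) := by simp
        _ ≤ ∑ j : Fin N, (volume (J ∩ ((fun t => t + τ j) ⁻¹' B \ E)) + volume (J ∩ E)) :=
          Finset.sum_le_sum fun j _ => hj j
        _ ≤ _ := by
          rw [Finset.sum_add_distrib]
          gcongr
          simp
    have hN0 : (N : ℝ≥0∞) ≠ 0 := by exact_mod_cast hN.ne'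
    have hNt : (N : ℝ≥0∞) ≠ ⊤ := ENNReal.natCast_ne_top N
    have hNof : (N : ℝ≥0∞) = ENNReal.ofReal (N : ℝ) := by simp
    rw [← ENNReal.mul_le_mul_iff_right hN0 hNt]
    refine htot.trans ?_
    rw [mul_add]
    calc ENNReal.ofReal (l + 2 * R) + N * volume (J ∩ E)
        ≤ ENNReal.ofReal (l + 2 * R) + N * (volume (Set.Icc (ξ - R) (ξ - R + l) ∩ E)
            + ENNReal.ofReal (2 * R)) := by gcongr
      _ = (ENNReal.ofReal (l + 2 * R) + N * ENNReal.ofReal (2 * R))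
          + N * volume (Set.Icc (ξ - R) (ξ - R + l) ∩ E) := by ring
      _ ≤ _ := by
        gcongr
        rw [hNof, ← ENNReal.ofReal_mul hNr.le, ← ENNReal.ofReal_mul hNr.le,
          ← ENNReal.ofReal_add (by positivity) (by positivity)]
        apply ENNReal.ofReal_le_ofReal
        apply le_of_eq
        field_simp
        ring
  set C := 2 * R / N + 2 * R with hC
  have hC0 : 0 ≤ C := by positivity
  have hlim : limsup (fun l : ℝ => ENNReal.ofReal (1 / N + C / l)) atTop = ENNReal.ofReal (1 / N) := by
    apply Tendsto.limsup_eq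
    apply ENNReal.tendsto_ofReal
    have : Tendsto (fun l : ℝ => C / l) atTop (𝓝 0) := tendsto_const_nhds.div_atTop tendsto_id
    simpa using this.const_add (1 / (N:ℝ))
  rw [← hlim]
  unfold kappaW
  refine le_trans ?_ (limsup_add_le_aux _ _)
  apply limsup_le_limsup _ (by isBoundedDefault) (by isBoundedDefault)
  filter_upwards [eventually_gt_atTop (0:ℝ)] with l hl
  refine iSup_le fun ξ => ?_
  refine le_trans (mul_le_mul_right (key l hl ξ) _) ?_
  rw [mul_add]
  refine add_le_add ?_ (le_iSup (fun ξ : ℝ => ENNReal.ofReal (1 / l) *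
    volume (Set.Icc ξ (ξ + l) ∩ E)) (ξ - R))
  rw [← ENNReal.ofReal_mul (by positivity)]
  apply ENNReal.ofReal_le_ofReal
  apply le_of_eq
  field_simp


/-- Triangle wave: distance to the nearest integer. -/
noncomputable def tri (x : ℝ) : ℝ := ‖(x : UnitAddCircle)‖

theorem tri_eq (x : ℝ) : tri x = min (Int.fract x) (1 - Int.fract x) := by
  unfold tri
  rw [UnitAddCircle.norm_eq, abs_sub_round_eq_min]

theorem tri_nonneg (x : ℝ) : 0 ≤ tri x := norm_nonneg _

theorem tri_le_half (x : ℝ) : tri x ≤ 1 / 2 := by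
  rw [tri_eq, min_le_iff]
  by_contra! hc
  linarith [hc.1, hc.2]

theorem tri_add_sub_le (x y : ℝ) : |tri (x + y) - tri x| ≤ tri y := by
  unfold tri
  have := abs_norm_sub_norm_le ((x + y : ℝ) : UnitAddCircle) (x : UnitAddCircle)
  refine this.trans (le_of_eq ?_)
  rw [AddCircle.coe_add, add_sub_cancel_left]

theorem measurable_tri : Measurable tri := by
  unfold tri
  exact (continuous_norm.comp (AddCircle.continuous_mk' (1:ℝ))).measurable

theorem tri_le_abs_sub_int (x : ℝ) (z : ℤ) : tri x ≤ |x - z| := by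
  unfold tri
  rw [UnitAddCircle.norm_eq]
  exact round_le x z

theorem tri_sub_le_of_lt {x y : ℝ} (hx : Int.fract x < 1 / 2) (hy : Int.fract y < 1 / 2) :
    tri (x - y) ≤ |tri x - tri y| := by
  have h1 : tri x = Int.fract x := by rw [tri_eq]; apply min_eq_left; linarith
  have h2 : tri y = Int.fract y := by rw [tri_eq]; apply min_eq_left; linarith
  rw [h1, h2]
  refine (tri_le_abs_sub_int (x - y) (⌊x⌋ - ⌊y⌋)).trans (le_of_eq ?_)
  congr 1
  unfold Int.fract
  push_cast
  ring

theorem tri_sub_le_of_ge {x y : ℝ} (hx : 1 / 2 ≤ Int.fract x) (hy : 1 / 2 ≤ Int.fract y) :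
    tri (x - y) ≤ |tri x - tri y| := by
  have h1 : tri x = 1 - Int.fract x := by rw [tri_eq]; apply min_eq_right; linarith
  have h2 : tri y = 1 - Int.fract y := by rw [tri_eq]; apply min_eq_right; linarith
  rw [h1, h2, abs_sub_comm]
  refine (tri_le_abs_sub_int (x - y) (⌊x⌋ - ⌊y⌋)).trans (le_of_eq ?_)
  congr 1
  unfold Int.fract
  push_cast
  ring

theorem tri_ge {z c : ℝ} (hc : 0 < c) (h1 : c ≤ z) (h2 : z ≤ 1 - c) : c ≤ tri z := by
  have : Int.fract z = z := Int.fract_eq_self.2 ⟨by linarith, by linarith⟩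
  rw [tri_eq, this]
  exact le_min h1 (by linarith)

theorem tri_neg (x : ℝ) : tri (-x) = tri x := by
  unfold tri
  rw [AddCircle.coe_neg, norm_neg]

/-- Almost periodicity along a filter, real-valued functions. -/
def APf (𝓕 : Filter ℝ) (u : ℝ → ℝ) : Prop :=
  ∀ ε > 0, Tendsto (fun τ => kappaW {t | ε ≤ |u (t + τ) - u t|}) 𝓕 (𝓝 0)

theorem dither_step (𝓕 : Filter ℝ) (hR : ∀ s ∈ 𝓕, RelDense s) (Λ : Set ℝ)
    (hΛ : ∀ c > 0, ∃ lam ∈ Λ, 0 < lam ∧ lam < c) (u : ℝ → ℝ) (hu : Measurable u)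
    (hap : APf 𝓕 u) (η : ℝ) (hη : 0 < η) (ε : ℝ) (hε : 0 < ε) :
    ∃ lam ∈ Λ, ∃ β > 0, kappaW {t | |u t - η * tri (lam * t)| ≤ β} ≤ ENNReal.ofReal ε := by
  obtain ⟨N, hN⟩ := exists_nat_gt (4 / ε)
  have hNr : (0 : ℝ) < N := lt_trans (by positivity) hN
  have hN0 : 0 < N := by exact_mod_cast hNr
  set β := η / (16 * N) with hβ
  have hβ0 : 0 < β := by positivity
  have hs := (ENNReal.tendsto_nhds_zero.1 (hap β hβ0)) (ENNReal.ofReal (1 / (N * N)))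
    (by rw [gt_iff_lt, ENNReal.ofReal_pos]; positivity)
  obtain ⟨a, ha, hrel⟩ := hR _ hs
  obtain ⟨lam, hlΛ, hl0, hlc⟩ := hΛ (1 / (2 * N * a)) (by positivity)
  choose τ hτ using fun j : Fin N => hrel ((j : ℝ) / (N * lam))
  have hτ1 : ∀ j : Fin N, (j : ℝ) / N ≤ lam * τ j ∧ lam * τ j ≤ j / N + 1 / (2 * N) := by
    intro j
    obtain ⟨⟨h1, h2⟩, _⟩ := hτ j
    have e : lam * ((j : ℝ) / (N * lam)) = j / N := by field_simp
    have hla : lam * a ≤ 1 / (2 * N) := by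
      have := mul_le_mul_of_nonneg_right hlc.le ha.le
      refine this.trans (le_of_eq ?_)
      field_simp
    constructor
    · rw [← e]; exact mul_le_mul_of_nonneg_left h1 hl0.le
    · have := mul_le_mul_of_nonneg_left h2 hl0.le
      rw [mul_add, e] at this
      linarith
  have hsep : ∀ i j : Fin N, i ≠ j → ∀ t, 1 / (2 * N) ≤ tri (lam * (t + τ i) - lam * (t + τ j)) := by
    have main : ∀ i j : Fin N, j < i → ∀ t,
        1 / (2 * (N:ℝ)) ≤ tri (lam * (t + τ i) - lam * (t + τ j)) := by
      intro i j hij t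
      have e : lam * (t + τ i) - lam * (t + τ j) = lam * τ i - lam * τ j := by ring
      rw [e]
      have h1 : ((j : ℕ) : ℝ) + 1 ≤ (i : ℕ) := by exact_mod_cast hij
      have h2 : ((i : ℕ) : ℝ) + 1 ≤ N := by exact_mod_cast i.2
      have h3 : (0:ℝ) ≤ (j : ℕ) := by positivity
      have h1' : ((j : ℕ) : ℝ) / N + 1 / N ≤ (i : ℕ) / N := by
        rw [← add_div]; gcongr
      have h2' : ((i : ℕ) : ℝ) / N + 1 / N ≤ 1 := by
        rw [← add_div, div_le_one hNr]; exact h2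
      have h3' : (0:ℝ) ≤ (j : ℕ) / N := by positivity
      have e2 : (1:ℝ) / N = 1 / (2 * N) + 1 / (2 * N) := by field_simp; norm_num
      apply tri_ge (by positivity)
      · linarith [(hτ1 i).1, (hτ1 j).2]
      · linarith [(hτ1 i).2, (hτ1 j).1]
    intro i j hij t
    rcases lt_or_gt_of_ne hij with h | h
    · rw [← tri_neg, neg_sub]; exact main j i h t
    · exact main i j h t
  refine ⟨lam, hlΛ, β, hβ0, ?_⟩
  set E := ⋃ j ∈ (Finset.univ : Finset (Fin N)), {t | β ≤ |u (t + τ j) - u t|} with hE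
  have hEm : MeasurableSet E := by
    apply Finset.measurableSet_biUnion
    intro j _
    apply measurableSet_le measurable_const
    exact ((hu.comp (measurable_id.add_const _)).sub hu).abs
  have hEk : kappaW E ≤ ENNReal.ofReal (1 / N) := by
    refine (kappaW_biUnion_le _ _).trans ?_
    refine (Finset.sum_le_sum fun j _ => (hτ j).2).trans ?_
    rw [Finset.sum_const, ← ENNReal.ofReal_nsmul]
    apply ENNReal.ofReal_le_ofReal
    apply le_of_eq
    simp
    field_simp
  have hmt : Measurable fun t : ℝ => lam * t := measurable_id.const_mul lam
  have hBm : MeasurableSet {t | |u t - η * tri (lam * t)| ≤ β} := by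
    apply measurableSet_le _ measurable_const
    exact (hu.sub ((measurable_tri.comp hmt).const_mul η)).abs
  have hfr : MeasurableSet {t : ℝ | Int.fract (lam * t) < 1 / 2} :=
    measurableSet_lt (measurable_fract.comp hmt) measurable_const
  have hcl : ∀ i j : Fin N, i ≠ j → ∀ t, t ∉ E → 
      |u (t + τ i) - η * tri (lam * (t + τ i))| ≤ β → 
      |u (t + τ j) - η * tri (lam * (t + τ j))| ≤ β → 
      tri (lam * (t + τ i) - lam * (t + τ j)) ≤ |tri (lam * (t + τ i)) - tri (lam * (t + τ j))| →
      False := by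
    intro i j hij t htE h1 h2 h3
    have h4 := hsep i j hij t
    have h5 : ∀ j, |u (t + τ j) - u t| < β := by
      intro j
      by_contra hc
      apply htE
      simp only [hE, Set.mem_iUnion]
      exact ⟨j, Finset.mem_univ j, not_lt.1 hc⟩
    have h6 := abs_lt.1 (h5 i)
    have h7 := abs_lt.1 (h5 j)
    have h8 := abs_le.1 h1
    have h9 := abs_le.1 h2
    have h10 : η * |tri (lam * (t + τ i)) - tri (lam * (t + τ j))| < 4 * β := by
      rw [← abs_of_pos hη, ← abs_mul, abs_lt, mul_sub]
      constructor <;> linarith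
    have h11 : η * (1 / (2 * N)) < 4 * β := 
      lt_of_le_of_lt (mul_le_mul_of_nonneg_left (h4.trans h3) hη.le) h10
    have h12 : η * (1 / (2 * N)) = 8 * β := by
      rw [hβ]; field_simp; norm_num
    linarith
  have hp := kappaW_packing hN0 ({t | |u t - η * tri (lam * t)| ≤ β} ∩
    {t : ℝ | Int.fract (lam * t) < 1 / 2}) E (hBm.inter hfr) hEm τ (by
      rintro i j hij t htE ⟨h1, h2⟩ ⟨h3, h4⟩
      exact hcl i j hij t htE h1 h3 (tri_sub_le_of_lt h2 h4))
  have hq := kappaW_packing hN0 ({t | |u t - η * tri (lam * t)| ≤ β} ∩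
    {t : ℝ | Int.fract (lam * t) < 1 / 2}ᶜ) E (hBm.inter hfr.compl) hEm τ (by
      rintro i j hij t htE ⟨h1, h2⟩ ⟨h3, h4⟩
      exact hcl i j hij t htE h1 h3 (tri_sub_le_of_ge (not_lt.1 h2) (not_lt.1 h4)))
  have hr := kappaW_le_add (A := {t | |u t - η * tri (lam * t)| ≤ β})
    (B := {t | |u t - η * tri (lam * t)| ≤ β} ∩ {t : ℝ | Int.fract (lam * t) < 1 / 2})
    (C := {t | |u t - η * tri (lam * t)| ≤ β} ∩ {t : ℝ | Int.fract (lam * t) < 1 / 2}ᶜ)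
    (fun t ht => by
      by_cases h : Int.fract (lam * t) < 1 / 2
      · exact Or.inl ⟨ht, h⟩
      · exact Or.inr ⟨ht, h⟩)
  have hp' := hp.trans (add_le_add le_rfl hEk)
  have hq' := hq.trans (add_le_add le_rfl hEk)
  refine hr.trans ((add_le_add hp' hq').trans ?_)
  rw [← ENNReal.ofReal_add (by positivity) (by positivity),
    ← ENNReal.ofReal_add (by positivity) (by positivity)]
  apply ENNReal.ofReal_le_ofReal
  have : 4 / (N:ℝ) < ε := by
    rw [div_lt_iff₀ hNr]; rw [div_lt_iff₀ hε] at hN; linarith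
  have e : 1 / (N:ℝ) + 1 / N + (1 / N + 1 / N) = 4 / N := by ring
  linarith

theorem APf.sub_tri {𝓕 : Filter ℝ} {u : ℝ → ℝ} (hu : APf 𝓕 u) (η lam : ℝ)
    (hl : Tendsto (fun τ => tri (lam * τ)) 𝓕 (𝓝 0)) :
    APf 𝓕 (fun t => u t - η * tri (lam * t)) := by
  intro ε hε
  have h1 := hu (ε / 2) (by positivity)
  have h2 : ∀ᶠ τ in 𝓕, |η| * tri (lam * τ) < ε / 2 := by
    have := hl.const_mul |η|
    rw [mul_zero] at this
    exact this.eventually (gt_mem_nhds (by positivity))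
  rw [ENNReal.tendsto_nhds_zero] at h1 ⊢
  intro c hc
  filter_upwards [h1 c hc, h2] with τ h1 h2
  refine (kappaW_mono ?_).trans h1
  intro t ht
  simp only [Set.mem_ofPred_eq] at ht ⊢
  have h3 : |η * tri (lam * (t + τ)) - η * tri (lam * t)| < ε / 2 := by
    rw [← mul_sub, abs_mul]
    refine lt_of_le_of_lt (mul_le_mul_of_nonneg_left ?_ (abs_nonneg _)) h2
    rw [mul_add]
    exact tri_add_sub_le _ _
  have h4 : |(u (t + τ) - u t) - (η * tri (lam * (t + τ)) - η * tri (lam * t))| ≤ 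
    |u (t + τ) - u t| + |η * tri (lam * (t + τ)) - η * tri (lam * t)| := abs_sub _ _
  have h5 : u (t + τ) - η * tri (lam * (t + τ)) - (u t - η * tri (lam * t)) = 
    (u (t + τ) - u t) - (η * tri (lam * (t + τ)) - η * tri (lam * t)) := by ring
  rw [h5] at ht
  linarith

theorem APf.of_uniform {𝓕 : Filter ℝ} {w : ℝ → ℝ}
    (hw : ∀ ε > 0, ∃ u : ℝ → ℝ, APf 𝓕 u ∧ ∀ t, |w t - u t| ≤ ε) : APf 𝓕 w := by
  intro ε hε
  obtain ⟨u, hu, hwu⟩ := hw (ε / 4) (by positivity)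
  have h1 := hu (ε / 2) (by positivity)
  rw [ENNReal.tendsto_nhds_zero] at h1 ⊢
  intro c hc
  filter_upwards [h1 c hc] with τ h1
  refine (kappaW_mono ?_).trans h1
  intro t ht
  simp only [Set.mem_ofPred_eq] at ht ⊢
  have h2 := abs_le.1 (hwu t)
  have h3 := abs_le.1 (hwu (t + τ))
  rcases le_abs.1 ht with h | h
  · exact le_abs.2 (Or.inl (by linarith))
  · exact le_abs.2 (Or.inr (by linarith))

theorem dither (𝓕 : Filter ℝ) (hR : ∀ s ∈ 𝓕, RelDense s) (Λ : Set ℝ)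
    (hΛ : ∀ c > 0, ∃ lam ∈ Λ, 0 < lam ∧ lam < c)
    (hΛF : ∀ lam ∈ Λ, Tendsto (fun τ => tri (lam * τ)) 𝓕 (𝓝 0))
    (φ : ℝ → ℝ) (hφ : Measurable φ)
    (hap : APf 𝓕 φ) (r : ℝ) (hr : 0 < r) :
    ∃ w : ℝ → ℝ, Measurable w ∧ APf 𝓕 w ∧ (∀ t, w t ≤ φ t - r ∧ φ t - 2 * r ≤ w t) ∧
      ∀ ε > 0, ∃ β > 0, kappaW {t | |w t| ≤ β} ≤ ENNReal.ofReal ε := by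
  classical
  let St := {s : (ℝ → ℝ) × ℝ // Measurable s.1 ∧ APf 𝓕 s.1 ∧ 0 < s.2}
  have step : ∀ (k : ℕ) (s : St), ∃ s' : St, 
      (∀ t, s'.1.1 t ≤ s.1.1 t ∧ s.1.1 t - s.1.2 / 2 ≤ s'.1.1 t) ∧ s'.1.2 ≤ s.1.2 / 2 ∧
      kappaW {t | |s'.1.1 t| ≤ 2 * s'.1.2} ≤ ENNReal.ofReal ((1 / 2 : ℝ) ^ k) := by
    rintro k ⟨⟨u, η⟩, hu, hua, hη⟩
    dsimp only at hu hua hη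
    obtain ⟨lam, hl, β, hβ, hk⟩ := dither_step 𝓕 hR Λ hΛ u hu hua η hη ((1 / 2 : ℝ) ^ k)
      (by positivity)
    refine ⟨⟨⟨fun t => u t - η * tri (lam * t), min (η / 2) (β / 2)⟩, ?_, ?_, ?_⟩, ?_, ?_, ?_⟩
    · exact hu.sub ((measurable_tri.comp (measurable_id.const_mul lam)).const_mul η)
    · exact hua.sub_tri η lam (hΛF lam hl)
    · exact lt_min (by positivity) (by positivity)
    · intro t
      have h1 := mul_nonneg hη.le (tri_nonneg (lam * t))
      have h2 := mul_le_mul_of_nonneg_left (tri_le_half (lam * t)) hη.le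
      constructor <;> dsimp only <;> linarith
    · exact min_le_left _ _
    · refine (kappaW_mono ?_).trans hk
      intro t ht
      have : min (η / 2) (β / 2) ≤ β / 2 := min_le_right _ _
      simp only [Set.mem_ofPred_eq] at ht ⊢
      linarith
  choose nxt hn1 hn2 hn3 using step
  let s0 : St := ⟨⟨fun t => φ t - r, r⟩, hφ.sub_const r, by
    intro ε hε
    simpa using hap ε hε, hr⟩
  let sq : ℕ → St := fun n => Nat.rec s0 (fun k s => nxt k s) n
  let u : ℕ → ℝ → ℝ := fun n => (sq n).1.1
  let η : ℕ → ℝ := fun n => (sq n).1.2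
  have hη0 : ∀ n, 0 < η n := fun n => (sq n).2.2.2
  have hη1 : ∀ n, η (n + 1) ≤ η n / 2 := fun n => hn2 n (sq n)
  have hu1 : ∀ n t, u (n + 1) t ≤ u n t ∧ u n t - η n / 2 ≤ u (n + 1) t := 
    fun n t => hn1 n (sq n) t
  have hu2 : ∀ n, kappaW {t | |u (n + 1) t| ≤ 2 * η (n + 1)} ≤ ENNReal.ofReal ((1 / 2 : ℝ) ^ n) :=
    fun n => hn3 n (sq n)
  have hηg : ∀ k n, η (k + n) ≤ η k / 2 ^ n := by
    intro k n
    induction n with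
    | zero => simp
    | succ n ih =>
      have := hη1 (k + n)
      rw [← add_assoc]
      refine this.trans ?_
      rw [pow_succ, ← div_div]
      gcongr
  have hdist : ∀ k t n, dist (u (k + n) t) (u (k + (n + 1)) t) ≤ η k / 2 / 2 ^ n := by
    intro k t n
    have h1 := hu1 (k + n) t
    rw [← add_assoc, Real.dist_eq, abs_of_nonneg (by linarith)]
    have := hηg k n
    have e : η k / 2 / 2 ^ n = η k / 2 ^ n / 2 := by ring
    rw [e]
    linarith
  have hlim : ∀ t, ∃ x, Tendsto (fun n => u n t) atTop (𝓝 x) := by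
    intro t
    apply cauchySeq_tendsto_of_complete
    apply cauchySeq_of_le_geometric_two (C := η 0)
    intro n
    simpa using hdist 0 t n
  choose w hw using hlim
  have hwu : ∀ k t, w t ≤ u k t ∧ u k t - η k ≤ w t := by
    intro k t
    have ht : Tendsto (fun n => u (k + n) t) atTop (𝓝 (w t)) := by
      have := (tendsto_add_atTop_iff_nat k).2 (hw t)
      simpa [add_comm] using this
    have h1 := dist_le_of_le_geometric_two_of_tendsto₀ (f := fun n => u (k + n) t) (hdist k t) ht
    have h2 : w t ≤ u k t := by
      apply le_of_tendsto ht
      refine Eventually.of_forall fun n => ?_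
      induction n with
      | zero => simp
      | succ n ih => exact (hu1 (k + n) t).1.trans ih
    refine ⟨h2, ?_⟩
    simp only [add_zero, Real.dist_eq] at h1
    have := abs_le.1 h1
    linarith
  have hηt : Tendsto η atTop (𝓝 0) := by
    apply squeeze_zero (fun n => (hη0 n).le) (fun n => by simpa using hηg 0 n)
    exact tendsto_const_nhds.div_atTop (tendsto_pow_atTop_atTop_of_one_lt (by norm_num))
  refine ⟨w, ?_, ?_, ?_, ?_⟩
  · exact measurable_of_tendsto_metrizable (fun n => (sq n).2.1) (tendsto_pi_nhds.2 hw)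
  · apply APf.of_uniform
    intro ε hε
    obtain ⟨n, hn⟩ := (hηt.eventually (gt_mem_nhds hε)).exists
    refine ⟨u n, (sq n).2.2.1, fun t => ?_⟩
    have := hwu n t
    rw [abs_le]; constructor <;> linarith
  · intro t
    have h := hwu 0 t
    have e1 : u 0 t = φ t - r := rfl
    have e2 : η 0 = r := rfl
    rw [e1, e2] at h
    constructor <;> linarith
  · intro ε hε
    obtain ⟨n, hn⟩ := exists_pow_lt_of_lt_one hε (show (1/2 : ℝ) < 1 by norm_num)
    refine ⟨η (n + 1), hη0 (n + 1), ?_⟩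
    refine le_trans (kappaW_mono ?_) ((hu2 n).trans (ENNReal.ofReal_le_ofReal hn.le))
    intro t ht
    simp only [Set.mem_ofPred_eq, abs_le] at ht ⊢
    have := hwu (n + 1) t
    have := hη0 (n + 1)
    constructor <;> linarith


theorem ap_sign {𝓕 : Filter ℝ} {w : ℝ → ℝ} (hw : APf 𝓕 w)
    (hk : ∀ ε > 0, ∃ β > 0, kappaW {t | |w t| ≤ β} ≤ ENNReal.ofReal ε) :
    Tendsto (fun τ => kappaW {t | ¬ (w (t + τ) < 0 ↔ w t < 0)}) 𝓕 (𝓝 0) := by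
  rw [ENNReal.tendsto_nhds_zero]
  intro c hc
  obtain ⟨ε, hε, hεc⟩ : ∃ ε : ℝ, 0 < ε ∧ ENNReal.ofReal ε + ENNReal.ofReal ε ≤ c := by
    obtain ⟨e, he0, hec⟩ := ENNReal.lt_iff_exists_nnreal_btwn.1 hc
    have he : (0:ℝ) < e := by exact_mod_cast he0
    refine ⟨e / 2, by positivity, ?_⟩
    rw [← ENNReal.ofReal_add (by positivity) (by positivity), add_halves, ENNReal.ofReal_coe_nnreal]
    exact hec.le
  obtain ⟨β, hβ, hkβ⟩ := hk ε hε
  have h1 := ENNReal.tendsto_nhds_zero.1 (hw β hβ) (ENNReal.ofReal ε) (by simpa using hε)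
  filter_upwards [h1] with τ h1
  refine (kappaW_le_add (B := {t | |w t| ≤ β}) (C := {t | β ≤ |w (t + τ) - w t|}) ?_).trans
    ((add_le_add hkβ h1).trans hεc)
  intro t ht
  by_contra! hc
  obtain ⟨h2, h3⟩ := hc
  simp only [Set.mem_ofPred_eq, not_le] at h2 h3
  have h4 := abs_lt.1 h3
  apply ht
  rcases lt_abs.1 h2 with h | h
  · constructor <;> intro <;> linarith
  · constructor <;> intro <;> linarith

theorem exists_index (𝓕 : Filter ℝ) (hR : ∀ s ∈ 𝓕, RelDense s) (Λ : Set ℝ)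
    (hΛ : ∀ c > 0, ∃ lam ∈ Λ, 0 < lam ∧ lam < c)
    (hΛF : ∀ lam ∈ Λ, Tendsto (fun τ => tri (lam * τ)) 𝓕 (𝓝 0))
    (φ : ℕ → ℝ → ℝ) (hφ : ∀ i, Measurable (φ i))
    (hap : ∀ i, APf 𝓕 (φ i)) (hcov : ∀ r > 0, ∀ t, ∃ i, φ i t < r)
    (htail : ∀ r > 0, ∀ ε > 0, ∃ N, kappaW {t | ∀ i < N, r ≤ φ i t} ≤ ENNReal.ofReal ε)
    (r : ℝ) (hr : 0 < r) :
    ∃ c : ℝ → ℕ, Measurable c ∧ (∀ t, φ (c t) t < 2 * r) ∧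
      (∀ ε > 0, ∃ N, kappaW {t | N ≤ c t} ≤ ENNReal.ofReal ε) ∧
      Tendsto (fun τ => kappaW {t | c (t + τ) ≠ c t}) 𝓕 (𝓝 0) := by
  classical
  choose w hwm hwa hwb hwk using fun i => dither 𝓕 hR Λ hΛ hΛF (φ i) (hφ i) (hap i) r hr
  have hex : ∀ t, ∃ i, w i t < 0 := by
    intro t
    obtain ⟨i, hi⟩ := hcov r hr t
    exact ⟨i, by linarith [(hwb i t).1]⟩
  have htl : ∀ ε > 0, ∃ N, kappaW {t | N ≤ Nat.find (hex t)} ≤ ENNReal.ofReal ε := by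
    intro ε hε
    obtain ⟨N, hN⟩ := htail r hr ε hε
    refine ⟨N, (kappaW_mono ?_).trans hN⟩
    intro t ht i hi
    have := Nat.find_min (hex t) (lt_of_lt_of_le hi ht)
    linarith [(hwb i t).1]
  refine ⟨fun t => Nat.find (hex t), ?_, ?_, htl, ?_⟩
  · exact measurable_find hex fun k => measurableSet_lt (hwm k) measurable_const
  · intro t
    have := Nat.find_spec (hex t)
    linarith [(hwb (Nat.find (hex t)) t).2]
  · rw [ENNReal.tendsto_nhds_zero]
    intro c hc
    obtain ⟨ε, hε, hεc⟩ : ∃ ε : ℝ, 0 < ε ∧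
        ENNReal.ofReal ε + (ENNReal.ofReal ε + ENNReal.ofReal ε) ≤ c := by
      obtain ⟨e, he0, hec⟩ := ENNReal.lt_iff_exists_nnreal_btwn.1 hc
      have he : (0:ℝ) < e := by exact_mod_cast he0
      refine ⟨e / 3, by positivity, ?_⟩
      rw [← ENNReal.ofReal_add (by positivity) (by positivity),
        ← ENNReal.ofReal_add (by positivity) (by positivity)]
      refine le_trans (le_of_eq ?_) hec.le
      rw [← ENNReal.ofReal_coe_nnreal]
      congr 1
      ring
    obtain ⟨N, hN⟩ := htl ε hε
    have h1 : Tendsto (fun τ => ∑ i ∈ Finset.range N,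
        kappaW {t | ¬ (w i (t + τ) < 0 ↔ w i t < 0)}) 𝓕 (𝓝 0) := by
      have := tendsto_finsetSum (Finset.range N) (fun i _ => ap_sign (hwa i) (hwk i))
      simpa using this
    have h2 := ENNReal.tendsto_nhds_zero.1 h1 (ENNReal.ofReal ε) (by simpa using hε)
    filter_upwards [h2] with τ h2
    refine le_trans ?_ hεc
    have h3 : kappaW {t | N ≤ Nat.find (hex (t + τ))} ≤ ENNReal.ofReal ε :=
      (kappaW_preimage_le {t | N ≤ Nat.find (hex t)} τ).trans hN
    refine (kappaW_le_add (B := {t | N ≤ Nat.find (hex t)}) (C := {t | N ≤ Nat.find (hex (t + τ))} ∪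
      ⋃ i ∈ Finset.range N, {t | ¬ (w i (t + τ) < 0 ↔ w i t < 0)}) ?_).trans
      (add_le_add hN ((kappaW_union_le _ _).trans (add_le_add h3 ((kappaW_biUnion_le _ _).trans h2))))
    intro t ht
    by_contra hcon
    rw [not_or] at hcon
    obtain ⟨h4, h5⟩ := hcon
    simp only [Set.mem_union, not_or, Set.mem_iUnion, not_exists, Set.mem_ofPred_eq, not_le,
      not_not, Finset.mem_range] at h4 h5
    obtain ⟨h5, h6⟩ := h5
    apply ht
    apply le_antisymm
    · exact Nat.find_min' _ ((h6 _ h4).2 (Nat.find_spec (hex t)))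
    · exact Nat.find_min' _ ((h6 _ h5).1 (Nat.find_spec (hex (t + τ))))

theorem relDense_mono {s t : Set ℝ} (hst : s ⊆ t) (hs : RelDense s) : RelDense t := by
  obtain ⟨a, ha, h⟩ := hs
  exact ⟨a, ha, fun ξ => (h ξ).mono (Set.inter_subset_inter_right _ hst)⟩

theorem relDense_inf_comap {G : Type*} [AddCommGroup G] [TopologicalSpace G]
    [IsTopologicalAddGroup G] [CompactSpace G] (θ : ℝ →+ G) (𝓖 : Filter ℝ)
    (h1 : ∀ s ∈ 𝓖, RelDense s) (h2 : ∀ s ∈ 𝓖, ∃ v ∈ 𝓖, ∀ a ∈ v, ∀ b ∈ v, a - b ∈ s) :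
    ∀ s ∈ 𝓖 ⊓ comap θ (𝓝 0), RelDense s := by
  classical
  intro s hs
  obtain ⟨s1, hs1, s2, hs2, rfl⟩ := mem_inf_iff.1 hs
  obtain ⟨V, hV, hVs⟩ := mem_comap.1 hs2
  obtain ⟨v, hv, hvs⟩ := h2 s1 hs1
  have hc : Tendsto (fun p : G × G => p.1 - p.2) (𝓝 0 ×ˢ 𝓝 0) (𝓝 0) := by
    have : Continuous (fun p : G × G => p.1 - p.2) := by fun_prop
    have := this.tendsto (0, 0)
    rwa [nhds_prod_eq, sub_zero] at this
  obtain ⟨W, hW, hWV⟩ := mem_prod_same_iff.1 (hc hV)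
  have hU : ∀ x : G, {y | y - x ∈ W} ∈ 𝓝 x := by
    intro x
    have : Continuous (fun y : G => y - x) := by fun_prop
    have := this.tendsto x
    rw [sub_self] at this
    exact this hW
  obtain ⟨F, -, hF⟩ := (isCompact_univ (X := G)).elim_nhds_subcover (fun x => {y | y - x ∈ W})
    (fun x _ => hU x)
  let rep : G → ℝ := fun x => if hx : ∃ σ ∈ v, θ σ - x ∈ W then hx.choose else 0
  have hrep : ∀ x, (∃ σ ∈ v, θ σ - x ∈ W) → rep x ∈ v ∧ θ (rep x) - x ∈ W := by
    intro x hx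
    simp only [rep, dif_pos hx]
    exact hx.choose_spec
  set R := ∑ x ∈ F, |rep x| with hRdef
  have hR0 : 0 ≤ R := Finset.sum_nonneg fun _ _ => abs_nonneg _
  have hR : ∀ x ∈ F, |rep x| ≤ R := fun x hx =>
    Finset.single_le_sum (f := fun x => |rep x|) (fun _ _ => abs_nonneg _) hx
  obtain ⟨a, ha, hrd⟩ := h1 v hv
  refine ⟨2 * R + a, by linarith, fun ξ => ?_⟩
  obtain ⟨τ, ⟨ht1, ht2⟩, htv⟩ := hrd (ξ + R)
  have := hF (Set.mem_univ (θ τ))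
  simp only [Set.mem_iUnion] at this
  obtain ⟨x, hx, hxW⟩ := this
  obtain ⟨hr1, hr2⟩ := hrep x ⟨τ, htv, hxW⟩
  have hb := abs_le.1 (hR x hx)
  refine ⟨τ - rep x, ⟨by linarith, by linarith⟩, hvs _ htv _ hr1, hVs ?_⟩
  have h3 := hWV (Set.mk_mem_prod hxW hr2)
  simpa [map_sub] using h3


/-- A bounded compatible distance function. -/
structure BddDist {α : Type*} [TopologicalSpace α] (d : α → α → ℝ) : Prop where
  nonneg : ∀ x y, 0 ≤ d x y
  le_one : ∀ x y, d x y ≤ 1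
  symm : ∀ x y, d x y = d y x
  triangle : ∀ x y z, d x z ≤ d x y + d y z
  nhds : ∀ x, ∀ r > 0, {y | d x y < r} ∈ 𝓝 x
  meas : ∀ f g : ℝ → α, StronglyMeasurable f → StronglyMeasurable g →
    Measurable fun t => d (f t) (g t)

theorem truncEdist_triangle {α : Type*} [PseudoEMetricSpace α] (x y z : α) :
    (min 1 (edist x z)).toReal ≤ (min 1 (edist x y)).toReal + (min 1 (edist y z)).toReal := by
  have hne : ∀ a : ℝ≥0∞, min 1 a ≠ ⊤ := fun a => ne_top_of_le_ne_top ENNReal.one_ne_top (min_le_left _ _)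
  rw [← ENNReal.toReal_add (hne _) (hne _)]
  apply ENNReal.toReal_mono (ENNReal.add_ne_top.2 ⟨hne _, hne _⟩)
  rcases le_total 1 (edist x y) with h | h
  · rw [min_eq_left h]; exact (min_le_left _ _).trans le_self_add
  rcases le_total 1 (edist y z) with h' | h'
  · rw [min_eq_left h']; exact (min_le_left _ _).trans le_add_self
  rw [min_eq_right h, min_eq_right h']
  exact (min_le_right _ _).trans (edist_triangle _ _ _)

theorem bddDist_trunc {α : Type*} [PseudoEMetricSpace α] :
    BddDist (fun x y : α => (min 1 (edist x y)).toReal) where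
  nonneg _ _ := ENNReal.toReal_nonneg
  le_one x y := ENNReal.toReal_le_of_le_ofReal zero_le_one (by simp)
  symm x y := by rw [edist_comm]
  triangle := truncEdist_triangle
  nhds x r hr := by
    have : {y | edist y x < ENNReal.ofReal r} ∈ 𝓝 x :=
      Metric.eball_mem_nhds x (ENNReal.ofReal_pos.2 hr)
    filter_upwards [this] with y hy
    have hne : min 1 (edist x y) ≠ ⊤ := ne_top_of_le_ne_top ENNReal.one_ne_top (min_le_left _ _)
    show (min 1 (edist x y)).toReal < r
    rw [← ENNReal.lt_ofReal_iff_toReal_lt hne, edist_comm]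
    exact lt_of_le_of_lt (min_le_right _ _) hy
  meas f g hf hg := (measurable_const.min (hf.edist hg).measurable).ennreal_toReal

theorem clDist_eq {U : Type*} [MetricSpace U] :
    (clDist : Closeds U → Closeds U → ℝ) = fun A B => (min 1 (edist A B)).toReal := rfl

theorem bdist_eq {U : Type*} [PseudoMetricSpace U] :
    (bdist : U → U → ℝ) = fun x y => (min 1 (edist x y)).toReal := by
  funext x y
  unfold bdist
  rw [edist_dist]
  rcases le_total 1 (dist x y) with h | h
  · have h' : (1 : ℝ≥0∞) ≤ ENNReal.ofReal (dist x y) := by simpa using h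
    rw [min_eq_left h, min_eq_left h']; simp
  · have h' : ENNReal.ofReal (dist x y) ≤ 1 := by simpa using h
    rw [min_eq_right h, min_eq_right h', ENNReal.toReal_ofReal dist_nonneg]

theorem bddDist_clDist {U : Type*} [MetricSpace U] :
    BddDist (clDist : Closeds U → Closeds U → ℝ) := by
  rw [clDist_eq]; exact bddDist_trunc

theorem bddDist_bdist {U : Type*} [MetricSpace U] : BddDist (bdist : U → U → ℝ) := by
  rw [bdist_eq]; exact bddDist_trunc

theorem weylD_one {α : Type*} (d : α → α → ℝ) (l : ℝ) (f g : ℝ → α) :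
    weylD d 1 l f g = ⨆ ξ : ℝ, ENNReal.ofReal (1 / l) *
      ∫⁻ t in Set.Icc ξ (ξ + l), ENNReal.ofReal (d (f t) (g t)) := by
  unfold weylD
  simp

theorem weylDinf_congr_ae {α : Type*} (d : α → α → ℝ) {f g f' g' : ℝ → α}
    (hf : f =ᵐ[volume] f') (hg : g =ᵐ[volume] g') :
    weylDinf d 1 f g = weylDinf d 1 f' g' := by
  unfold weylDinf
  congr 1
  funext l
  rw [weylD_one, weylD_one]
  congr 1
  funext ξ
  congr 1
  apply lintegral_congr_ae
  apply ae_restrict_of_ae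
  filter_upwards [hf, hg] with t h1 h2
  rw [h1, h2]

theorem ae_shift {α : Type*} {f f' : ℝ → α} (hf : f =ᵐ[volume] f') (τ : ℝ) :
    (fun t => f (t + τ)) =ᵐ[volume] fun t => f' (t + τ) :=
  (quasiMeasurePreserving_add_right (volume : Measure ℝ) τ).ae hf

theorem weylDinf_le {α : Type*} (d : α → α → ℝ) (hd : ∀ x y, d x y ≤ 1) (f g : ℝ → α)
    (S : Set ℝ) (a : ℝ) (hS : ∀ᵐ t ∂(volume : Measure ℝ), t ∉ S → d (f t) (g t) ≤ a) :
    weylDinf d 1 f g ≤ ENNReal.ofReal a + kappaW S := by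
  have hc : limsup (fun _ : ℝ => ENNReal.ofReal a) (atTop : Filter ℝ) = ENNReal.ofReal a :=
    limsup_const _
  rw [← hc]
  unfold weylDinf kappaW
  refine le_trans ?_ (limsup_add_le_aux _ _)
  apply limsup_le_limsup _ (by isBoundedDefault) (by isBoundedDefault)
  filter_upwards [eventually_gt_atTop (0:ℝ)] with l hl
  rw [weylD_one]
  refine iSup_le fun ξ => ?_
  have h1 : ∫⁻ t in Set.Icc ξ (ξ + l), ENNReal.ofReal (d (f t) (g t)) ≤
      ENNReal.ofReal a * ENNReal.ofReal l + volume (Set.Icc ξ (ξ + l) ∩ S) := by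
    calc ∫⁻ t in Set.Icc ξ (ξ + l), ENNReal.ofReal (d (f t) (g t))
        ≤ ∫⁻ t in Set.Icc ξ (ξ + l), (ENNReal.ofReal a + S.indicator 1 t) := by
          apply lintegral_mono_ae
          apply ae_restrict_of_ae
          filter_upwards [hS] with t ht
          by_cases hts : t ∈ S
          · rw [Set.indicator_of_mem hts]
            refine le_trans ?_ le_add_self
            simpa using hd (f t) (g t)
          · refine le_trans ?_ le_self_add
            exact ENNReal.ofReal_le_ofReal (ht hts)
      _ = ENNReal.ofReal a * ENNReal.ofReal l +
          ∫⁻ t in Set.Icc ξ (ξ + l), S.indicator 1 t := by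
          rw [lintegral_add_left measurable_const]
          simp
      _ ≤ _ := by
          gcongr
          refine (lintegral_indicator_one_le _).trans ?_
          rw [Measure.restrict_apply' measurableSet_Icc, Set.inter_comm]
  refine (mul_le_mul_right h1 _).trans ?_
  rw [mul_add]
  refine add_le_add ?_ (le_iSup (fun ξ : ℝ => ENNReal.ofReal (1 / l) *
    volume (Set.Icc ξ (ξ + l) ∩ S)) ξ)
  rw [mul_comm (ENNReal.ofReal a), ← mul_assoc, ← ENNReal.ofReal_mul (by positivity)]
  have : 1 / l * l = 1 := by field_simp
  rw [this]
  simp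

theorem kappaW_lt_of_weylDinf {α : Type*} (d : α → α → ℝ) (f g : ℝ → α)
    (hm : Measurable fun t => d (f t) (g t)) {ε c : ℝ} (hε : 0 < ε)
    (hD : weylDinf d 1 f g < ENNReal.ofReal (ε * c)) :
    kappaW {t | ε ≤ d (f t) (g t)} < ENNReal.ofReal c := by
  have h1 : ENNReal.ofReal ε * kappaW {t | ε ≤ d (f t) (g t)} ≤ weylDinf d 1 f g := by
    unfold kappaW weylDinf
    rw [← ENNReal.limsup_const_mul_of_ne_top ENNReal.ofReal_ne_top]
    apply limsup_le_limsup _ (by isBoundedDefault) (by isBoundedDefault)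
    refine Eventually.of_forall fun l => ?_
    dsimp only
    rw [weylD_one, ENNReal.mul_iSup]
    refine iSup_mono fun ξ => ?_
    rw [mul_left_comm]
    refine mul_le_mul_right ?_ _
    have h2 := mul_meas_ge_le_lintegral (μ := volume.restrict (Set.Icc ξ (ξ + l)))
      (f := fun t => ENNReal.ofReal (d (f t) (g t))) hm.ennreal_ofReal (ENNReal.ofReal ε)
    refine le_trans ?_ h2
    rw [Measure.restrict_apply' measurableSet_Icc, Set.inter_comm]
    gcongr
    intro ht
    exact ENNReal.ofReal_le_ofReal ht
  have h2 := lt_of_le_of_lt h1 hD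
  rw [ENNReal.ofReal_mul hε.le] at h2
  exact lt_of_mul_lt_mul_left' h2

theorem exists_seq_tail {α : Type*} [TopologicalSpace α] [PseudoMetrizableSpace α]
    (d : α → α → ℝ) (hd : BddDist d) (u u' : ℝ → α) (hu' : StronglyMeasurable u')
    (huu : u =ᵐ[volume] u')
    (hK : ∀ ε > 0, ∀ δ > 0, ∃ K : Set α, IsCompact K ∧
      kappaW {t | ENNReal.ofReal ε ≤ dInfDist d (u t) K} < ENNReal.ofReal δ) :
    ∃ A : ℕ → α, (∀ r > 0, ∀ t, ∃ i, d (u' t) (A i) < r) ∧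
      ∀ r > 0, ∀ ε > 0, ∃ N, kappaW {t | ∀ i < N, r ≤ d (u' t) (A i)} ≤ ENNReal.ofReal ε := by
  choose K hKc hKk using fun m : ℕ => hK (1 / ((m:ℝ) + 1)) (by positivity) (1 / ((m:ℝ) + 1))
    (by positivity)
  have hsep : IsSeparable (Set.range u' ∪ ⋃ m, K m) :=
    hu'.isSeparable_range.union (IsSeparable.iUnion fun m => (hKc m).isSeparable)
  obtain ⟨C, hC, hCs⟩ := hsep
  have hCne : C.Nonempty := by
    rw [← closure_nonempty_iff]
    exact ⟨u' 0, hCs (Or.inl ⟨0, rfl⟩)⟩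
  obtain ⟨A, rfl⟩ := hC.exists_eq_range hCne
  have hcl : ∀ x ∈ closure (Set.range A), ∀ r > 0, ∃ i, d x (A i) < r := by
    intro x hx r hr
    obtain ⟨y, hy, ⟨i, rfl⟩⟩ := mem_closure_iff_nhds.1 hx _ (hd.nhds x r hr)
    exact ⟨i, hy⟩
  refine ⟨A, fun r hr t => hcl _ (hCs (Or.inl ⟨t, rfl⟩)) r hr, ?_⟩
  intro r hr ε hε
  obtain ⟨m, hm⟩ := exists_nat_one_div_lt (lt_min (half_pos hr) hε)
  have hm1 := hm.trans_le (min_le_left _ _)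
  have hm2 := hm.trans_le (min_le_right _ _)
  choose! idx hidx using fun x (hx : x ∈ K m) =>
    hcl x (hCs (Or.inr (Set.mem_iUnion.2 ⟨m, hx⟩))) (r / 4) (by positivity)
  obtain ⟨s, hs, hsK⟩ := (hKc m).elim_nhds_subcover (fun x => {y | d x y < r / 4})
    (fun x _ => hd.nhds x _ (by positivity))
  refine ⟨s.sup idx + 1, ?_⟩
  refine le_trans (kappaW_mono_ae ?_) ((hKk m).le.trans (ENNReal.ofReal_le_ofReal hm2.le))
  filter_upwards [huu] with t ht h1
  by_contra h2
  simp only [Set.mem_ofPred_eq, not_le, dInfDist, iInf_lt_iff] at h2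
  obtain ⟨y, hy, h2⟩ := h2
  have h3 : d (u t) y < r / 2 :=
    lt_trans ((ENNReal.ofReal_lt_ofReal_iff (by positivity)).1 h2) hm1
  have h4 := hsK hy
  simp only [Set.mem_iUnion] at h4
  obtain ⟨x, hx, hxy⟩ := h4
  have h5 : d x y < r / 4 := hxy
  have h6 := hidx x (hs x hx)
  have h7 := h1 (idx x) (Nat.lt_succ_of_le (Finset.le_sup hx))
  rw [← ht] at h7
  have h8 := hd.triangle (u t) y (A (idx x))
  have h9 := hd.triangle y x (A (idx x))
  rw [hd.symm y x] at h9
  linarith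


theorem cheb {α : Type*} [TopologicalSpace α] (d : α → α → ℝ) (hd : BddDist d) (u u' : ℝ → α)
    (hu' : StronglyMeasurable u') (huu : u =ᵐ[volume] u') {ε : ℝ} (hε : 0 < ε) {τ : ℝ}
    (hτ : τ ∈ APeriods d 1 (ε * ε) u) :
    kappaW {t | ε ≤ d (u' t) (u' (t + τ))} < ENNReal.ofReal ε := by
  have h1 : weylDinf d 1 u (fun t => u (t + τ)) < ENNReal.ofReal (ε * ε) := hτ
  rw [weylDinf_congr_ae d huu (ae_shift huu τ)] at h1
  exact kappaW_lt_of_weylDinf d u' (fun t => u' (t + τ))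
    (hd.meas _ _ hu' (hu'.comp_measurable (measurable_add_const τ))) hε h1

/-- Sets of almost periods in measure. -/
def TP (ψ : ℝ → ℝ → ℝ) (ε : ℝ) : Set ℝ := {τ | kappaW {t | ε ≤ ψ t (t + τ)} < ENNReal.ofReal ε}

theorem TP_mono (ψ : ℝ → ℝ → ℝ) {ε ε' : ℝ} (h : ε ≤ ε') : TP ψ ε ⊆ TP ψ ε' := fun τ hτ =>
  lt_of_le_of_lt (kappaW_mono (fun _ ht => h.trans ht))
    (lt_of_lt_of_le hτ (ENNReal.ofReal_le_ofReal h))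

theorem TP_sub (ψ : ℝ → ℝ → ℝ) (hs : ∀ x y, ψ x y = ψ y x)
    (ht : ∀ x y z, ψ x z ≤ ψ x y + ψ y z) {ε : ℝ} (hε : 0 < ε) {a b : ℝ}
    (ha : a ∈ TP ψ (ε / 2)) (hb : b ∈ TP ψ (ε / 2)) : a - b ∈ TP ψ ε := by
  show kappaW _ < _
  have h1 : kappaW {t | ε ≤ ψ t (t + (a - b))} ≤
      kappaW ((fun t => t + (-b)) ⁻¹' {t | ε / 2 ≤ ψ t (t + b)}) +
      kappaW ((fun t => t + (-b)) ⁻¹' {t | ε / 2 ≤ ψ t (t + a)}) := by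
    apply kappaW_le_add
    intro t h
    by_contra hc
    push Not at hc
    obtain ⟨h1, h2⟩ := hc
    have h1' : ψ (t + -b) (t + -b + b) < ε / 2 := not_le.1 h1
    have h2' : ψ (t + -b) (t + -b + a) < ε / 2 := not_le.1 h2
    have h3 : ε ≤ ψ t (t + (a - b)) := h
    have h4 := ht t (t + -b) (t + (a - b))
    rw [neg_add_cancel_right, hs] at h1'
    rw [show t + -b + a = t + (a - b) by ring] at h2'
    linarith
  refine lt_of_le_of_lt h1 ?_
  have h2 := ENNReal.add_lt_add (lt_of_le_of_lt (kappaW_preimage_le _ (-b)) hb)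
    (lt_of_le_of_lt (kappaW_preimage_le _ (-b)) ha)
  rwa [← ENNReal.ofReal_add (by positivity) (by positivity), add_halves] at h2

theorem tri_tendsto_of_exp (x : ℕ → ℝ)
    (h : Tendsto (fun j => Complex.exp (Complex.I * ((2 * Real.pi * x j : ℝ) : ℂ))) atTop (𝓝 1)) :
    Tendsto (fun j => (x j : UnitAddCircle)) atTop (𝓝 0) := by
  rw [(AddCircle.homeomorphCircle (T := (1:ℝ)) one_ne_zero).isInducing.tendsto_nhds_iff]
  have hind : IsInducing (fun z : Circle => (z : ℂ)) := ⟨rfl⟩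
  rw [hind.tendsto_nhds_iff]
  have h0 : ((AddCircle.homeomorphCircle (T := (1:ℝ)) one_ne_zero 0 : Circle) : ℂ) = 1 := by
    rw [AddCircle.homeomorphCircle_apply, AddCircle.toCircle_zero]; simp
  rw [h0]
  refine h.congr fun j => ?_
  simp only [Function.comp_apply, AddCircle.homeomorphCircle_apply, AddCircle.toCircle_apply_mk,
    Circle.coe_exp]
  congr 1
  push_cast
  ring

theorem TP_tendsto (ψ : ℝ → ℝ → ℝ) {𝓣 : Filter ℝ}
    (hTB : 𝓣.HasBasis (fun ε => ε ∈ Set.Ioi (0:ℝ)) (TP ψ)) {ε : ℝ} (hε : 0 < ε) :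
    Tendsto (fun τ => kappaW {t | ε ≤ ψ t (t + τ)}) 𝓣 (𝓝 0) := by
  rw [ENNReal.tendsto_nhds_zero]
  intro η hη
  obtain ⟨c, hc, hcη⟩ : ∃ c : ℝ, 0 < c ∧ ENNReal.ofReal c ≤ η := by
    rcases eq_or_ne η ⊤ with h' | h'
    · exact ⟨1, one_pos, by rw [h']; exact le_top⟩
    · exact ⟨η.toReal, ENNReal.toReal_pos hη.ne' h', (ENNReal.ofReal_toReal h').le⟩
  have hm : TP ψ (min ε c) ∈ 𝓣 := hTB.mem_of_mem (Set.mem_Ioi.2 (lt_min hε hc))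
  filter_upwards [hm] with τ hτ
  have h1 : kappaW {t | min ε c ≤ ψ t (t + τ)} < ENNReal.ofReal (min ε c) := hτ
  have h3 : {t | ε ≤ ψ t (t + τ)} ⊆ {t | min ε c ≤ ψ t (t + τ)} :=
    fun t h2 => le_trans (min_le_left ε c) h2
  refine le_trans (kappaW_mono h3) (h1.le.trans ?_)
  exact (ENNReal.ofReal_le_ofReal (min_le_right _ _)).trans hcη

theorem exists_filter (ψ : ℝ → ℝ → ℝ) (hs : ∀ x y, ψ x y = ψ y x)
    (ht : ∀ x y z, ψ x z ≤ ψ x y + ψ y z) (Q : ℝ → Set ℝ) (hQ : ∀ ε > 0, RelDense (Q ε))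
    (hQm : ∀ ε ε', ε ≤ ε' → Q ε ⊆ Q ε')
    (hQT : ∀ ε > 0, ∃ ε0 > 0, Q ε0 ⊆ TP ψ ε) (h : ℝ → ℝ) :
    ∃ 𝓕 : Filter ℝ, (∀ s ∈ 𝓕, RelDense s) ∧
      (∀ lam ∈ {lam : ℝ | 2 * Real.pi * lam ∈ WMod bdist h},
        Tendsto (fun τ => tri (lam * τ)) 𝓕 (𝓝 0)) ∧
      (∀ ε > 0, Tendsto (fun τ => kappaW {t | ε ≤ ψ t (t + τ)}) 𝓕 (𝓝 0)) ∧
      (∀ s ∈ 𝓕, ∃ ε > 0, Q ε ∩ APeriods bdist 1 ε h ⊆ s) := by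
  set Λ := {lam : ℝ | 2 * Real.pi * lam ∈ WMod bdist h} with hΛ
  let θ : ℝ →+ (Λ → UnitAddCircle) :=
    { toFun := fun τ lam => ((lam.1 * τ : ℝ) : UnitAddCircle)
      map_zero' := by funext lam; simp
      map_add' := by intro a b; funext lam; simp [mul_add] }
  let 𝓣 : Filter ℝ := ⨅ ε ∈ Set.Ioi (0:ℝ), 𝓟 (TP ψ ε)
  have hdir : ∀ (R : ℝ → Set ℝ) (_ : ∀ ε ε', ε ≤ ε' → R ε ⊆ R ε'),
      (⨅ ε ∈ Set.Ioi (0:ℝ), 𝓟 (R ε)).HasBasis (fun ε => ε ∈ Set.Ioi (0:ℝ)) R := by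
    intro R hR
    refine hasBasis_biInf_principal ?_ ⟨1, Set.mem_Ioi.2 one_pos⟩
    intro a ha b hb
    exact ⟨min a b, Set.mem_Ioi.2 (lt_min ha hb), hR _ _ (min_le_left _ _), hR _ _ (min_le_right _ _)⟩
  have hTB : 𝓣.HasBasis (fun ε => ε ∈ Set.Ioi (0:ℝ)) (TP ψ) :=
    hdir _ fun _ _ hh => TP_mono ψ hh
  refine ⟨𝓣 ⊓ comap θ (𝓝 0), ?_, ?_, ?_, ?_⟩
  · apply relDense_inf_comap
    · intro s hs'
      obtain ⟨ε, hε, hsub⟩ := hTB.mem_iff.1 hs'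
      obtain ⟨ε0, hε0, h0⟩ := hQT ε hε
      exact relDense_mono (h0.trans hsub) (hQ _ hε0)
    · intro s hs'
      obtain ⟨ε, hε, hsub⟩ := hTB.mem_iff.1 hs'
      exact ⟨TP ψ (ε / 2), hTB.mem_of_mem (Set.mem_Ioi.2 (half_pos hε)),
        fun a ha b hb => hsub (TP_sub ψ hs ht hε ha hb)⟩
  · intro lam hlam
    have h1 : Tendsto θ (𝓣 ⊓ comap θ (𝓝 0)) (𝓝 0) := tendsto_comap.mono_left inf_le_right
    have h2 := (tendsto_pi_nhds.1 h1 ⟨lam, hlam⟩).norm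
    have h3 : Tendsto (fun τ => tri (lam * τ)) (𝓣 ⊓ comap θ (𝓝 0))
      (𝓝 ‖(0 : UnitAddCircle)‖) := h2
    rwa [norm_zero] at h3
  · intro ε hε
    refine Tendsto.mono_left ?_ inf_le_left
    exact TP_tendsto ψ hTB hε
  · have hRm : ∀ ε ε', ε ≤ ε' → Q ε ∩ APeriods bdist 1 ε h ⊆ Q ε' ∩ APeriods bdist 1 ε' h := by
      intro ε ε' hh τ hτ
      exact ⟨hQm _ _ hh hτ.1, lt_of_lt_of_le hτ.2 (ENNReal.ofReal_le_ofReal hh)⟩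
    have hB := hdir _ hRm
    intro s hs'
    suffices hle : (⨅ ε ∈ Set.Ioi (0:ℝ), 𝓟 (Q ε ∩ APeriods bdist 1 ε h)) ≤ 𝓣 ⊓ comap θ (𝓝 0) by
      obtain ⟨ε, hε, h1⟩ := hB.mem_iff.1 (hle hs')
      exact ⟨ε, hε, h1⟩
    refine le_inf ?_ ?_
    · refine hTB.ge_iff.2 fun ε hε => ?_
      obtain ⟨ε0, hε0, h0⟩ := hQT ε hε
      exact hB.mem_iff.2 ⟨ε0, hε0, Set.inter_subset_left.trans h0⟩
    · rw [← tendsto_iff_comap]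
      refine tendsto_pi_nhds.2 fun lam => ?_
      by_contra hcon
      rw [not_tendsto_iff_exists_frequently_notMem] at hcon
      obtain ⟨V, hV, hfr⟩ := hcon
      have h1 := fun j : ℕ => (hB.frequently_iff.1 hfr) (i := 1 / ((j:ℝ) + 1))
        (Set.mem_Ioi.2 (by positivity))
      choose τ hτ hτV using h1
      have h2 : Tendsto (fun j => weylDinf bdist 1 h (fun t => h (t + τ j))) atTop (𝓝 0) := by
        refine tendsto_of_tendsto_of_tendsto_of_le_of_le tendsto_const_nhds
          (h := fun j : ℕ => ENNReal.ofReal (1 / ((j:ℝ) + 1))) ?_ (fun j => zero_le) (fun j => (hτ j).2.le)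
        have := (ENNReal.continuous_ofReal.tendsto 0).comp tendsto_one_div_add_atTop_nhds_zero_nat
        simpa [Function.comp_def] using this
      have h3 := lam.2 τ h2
      have h4 := tri_tendsto_of_exp (fun j => lam.1 * τ j) (by simpa only [mul_assoc] using h3)
      obtain ⟨j, hj⟩ := (h4.eventually hV).exists
      exact hτV j hj


/-- Admissible index functions. -/
structure IdxOK (𝓕 : Filter ℝ) (c : ℝ → ℕ) : Prop where
  meas : Measurable c
  tail : ∀ ε > 0, ∃ N, kappaW {t | N ≤ c t} ≤ ENNReal.ofReal ε
  ap : Tendsto (fun τ => kappaW {t | c (t + τ) ≠ c t}) 𝓕 (𝓝 0)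

theorem nat_pair_lt {a b a' b' : ℕ} (h1 : a < a') (h2 : b < b') :
    Nat.pair a b < Nat.pair a' b' :=
  (Nat.pair_lt_pair_left b h1).trans (Nat.pair_lt_pair_right a' h2)

theorem IdxOK.pair {𝓕 : Filter ℝ} {c c' : ℝ → ℕ} (h : IdxOK 𝓕 c) (h' : IdxOK 𝓕 c') :
    IdxOK 𝓕 (fun t => Nat.pair (c t) (c' t)) where
  meas := (measurable_of_countable (fun p : ℕ × ℕ => Nat.pair p.1 p.2)).comp (h.meas.prodMk h'.meas)
  tail := by
    intro ε hε
    obtain ⟨N, hN⟩ := h.tail (ε / 2) (half_pos hε)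
    obtain ⟨N', hN'⟩ := h'.tail (ε / 2) (half_pos hε)
    refine ⟨Nat.pair N N', ?_⟩
    have h1 : kappaW {t | Nat.pair N N' ≤ Nat.pair (c t) (c' t)} ≤
        kappaW {t | N ≤ c t} + kappaW {t | N' ≤ c' t} := by
      apply kappaW_le_add
      intro t ht
      by_contra hc
      push Not at hc
      exact absurd ht (not_le.2 (nat_pair_lt (not_le.1 hc.1) (not_le.1 hc.2)))
    refine h1.trans ((add_le_add hN hN').trans ?_)
    rw [← ENNReal.ofReal_add (by positivity) (by positivity), add_halves]
  ap := by
    have h0 := h.ap.add h'.ap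
    rw [add_zero] at h0
    refine tendsto_of_tendsto_of_tendsto_of_le_of_le tendsto_const_nhds h0
      (fun _ => zero_le) (fun τ => ?_)
    apply kappaW_le_add
    intro t ht
    by_contra hc
    push Not at hc
    have e1 : c (t + τ) = c t := not_not.1 hc.1
    have e2 : c' (t + τ) = c' t := not_not.1 hc.2
    exact ht (by rw [e1, e2])

theorem exists_index2 {α β : Type*} [TopologicalSpace α] [TopologicalSpace β]
    (d1 : α → α → ℝ) (d2 : β → β → ℝ) (hd1 : BddDist d1) (hd2 : BddDist d2)
    (u : ℝ → α) (v : ℝ → β) (hu : StronglyMeasurable u) (hv : StronglyMeasurable v)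
    (𝓕 : Filter ℝ) (hR : ∀ s ∈ 𝓕, RelDense s)
    (Λ : Set ℝ) (hΛ : ∀ c > 0, ∃ lam ∈ Λ, 0 < lam ∧ lam < c)
    (hΛF : ∀ lam ∈ Λ, Tendsto (fun τ => tri (lam * τ)) 𝓕 (𝓝 0))
    (hψ : ∀ ε > 0, Tendsto (fun τ => kappaW
      {t | ε ≤ d1 (u t) (u (t + τ)) + d2 (v t) (v (t + τ))}) 𝓕 (𝓝 0))
    (A : ℕ → α) (y : ℕ → β)
    (hA : ∀ r > 0, ∀ t, ∃ i, d1 (u t) (A i) < r)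
    (hA' : ∀ r > 0, ∀ ε > 0, ∃ N, kappaW {t | ∀ i < N, r ≤ d1 (u t) (A i)} ≤ ENNReal.ofReal ε)
    (hy : ∀ r > 0, ∀ t, ∃ i, d2 (v t) (y i) < r)
    (hy' : ∀ r > 0, ∀ ε > 0, ∃ N, kappaW {t | ∀ i < N, r ≤ d2 (v t) (y i)} ≤ ENNReal.ofReal ε)
    (r : ℝ) (hr : 0 < r) :
    ∃ c : ℝ → ℕ, IdxOK 𝓕 c ∧
      ∀ t, d1 (u t) (A (c t).unpair.1) + d2 (v t) (y (c t).unpair.2) < r := by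
  have key := exists_index 𝓕 hR Λ hΛ hΛF
    (fun i t => d1 (u t) (A i.unpair.1) + d2 (v t) (y i.unpair.2)) ?_ ?_ ?_ ?_ (r / 2) (half_pos hr)
  · obtain ⟨c, h1, h2, h3, h4⟩ := key
    refine ⟨c, ⟨h1, h3, h4⟩, fun t => ?_⟩
    have := h2 t
    linarith
  · intro i
    exact (hd1.meas _ _ hu stronglyMeasurable_const).add (hd2.meas _ _ hv stronglyMeasurable_const)
  · intro i ε hε
    refine tendsto_of_tendsto_of_tendsto_of_le_of_le tendsto_const_nhds (hψ ε hε)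
      (fun _ => zero_le) (fun τ => kappaW_mono fun t ht => ?_)
    refine le_trans (show ε ≤ _ from ht) ?_
    have a1 := hd1.triangle (u t) (u (t + τ)) (A i.unpair.1)
    have a2 := hd1.triangle (u (t + τ)) (u t) (A i.unpair.1)
    have b1 := hd2.triangle (v t) (v (t + τ)) (y i.unpair.2)
    have b2 := hd2.triangle (v (t + τ)) (v t) (y i.unpair.2)
    rw [hd1.symm (u (t + τ)) (u t)] at a2
    rw [hd2.symm (v (t + τ)) (v t)] at b2
    rw [abs_le]
    constructor <;> linarith
  · intro r hr t
    obtain ⟨i, hi⟩ := hA (r / 2) (half_pos hr) t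
    obtain ⟨j, hj⟩ := hy (r / 2) (half_pos hr) t
    refine ⟨Nat.pair i j, ?_⟩
    simp only [Nat.unpair_pair]
    linarith
  · intro r hr ε hε
    obtain ⟨N, hN⟩ := hA' (r / 2) (half_pos hr) (ε / 2) (half_pos hε)
    obtain ⟨N', hN'⟩ := hy' (r / 2) (half_pos hr) (ε / 2) (half_pos hε)
    refine ⟨Nat.pair N N', ?_⟩
    refine (kappaW_le_add (B := {t | ∀ i < N, r / 2 ≤ d1 (u t) (A i)})
      (C := {t | ∀ i < N', r / 2 ≤ d2 (v t) (y i)}) ?_).trans ((add_le_add hN hN').trans ?_)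
    · intro t ht
      by_contra hc
      push Not at hc
      obtain ⟨h1, h2⟩ := hc
      have h1' : ∃ i < N, d1 (u t) (A i) < r / 2 := by
        by_contra hcc; push Not at hcc; exact h1 hcc
      have h2' : ∃ i < N', d2 (v t) (y i) < r / 2 := by
        by_contra hcc; push Not at hcc; exact h2 hcc
      obtain ⟨i, hi, hi'⟩ := h1'
      obtain ⟨j, hj, hj'⟩ := h2'
      have h3 := ht (Nat.pair i j) (nat_pair_lt hi hj)
      simp only [Nat.unpair_pair] at h3
      linarith
    · rw [← ENNReal.ofReal_add (by positivity) (by positivity), add_halves]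

theorem clDist_lt {U : Type*} [MetricSpace U] {S A : Closeds U} {r : ℝ} (hr : r ≤ 1)
    (h : clDist S A < r) : (∀ x ∈ S, ∃ y ∈ A, dist x y < r) ∧ ∀ y ∈ A, ∃ x ∈ S, dist x y < r := by
  have hne : min 1 (edist S A) ≠ ⊤ := ne_top_of_le_ne_top ENNReal.one_ne_top (min_le_left _ _)
  have h1 : min 1 (edist S A) < ENNReal.ofReal r := (ENNReal.lt_ofReal_iff_toReal_lt hne).2 h
  have h2 : Metric.hausdorffEDist (S : Set U) A < ENNReal.ofReal r := by
    rcases min_lt_iff.1 h1 with h3 | h3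
    · exact absurd h3 (not_lt.2 (by simpa using hr))
    · exact h3
  have conv : ∀ x y : U, edist x y < ENNReal.ofReal r → dist x y < r := by
    intro x y hxy
    rw [edist_dist] at hxy
    exact (ENNReal.ofReal_lt_ofReal_iff_of_nonneg dist_nonneg).1 hxy
  constructor
  · intro x hx
    obtain ⟨y, hy, hxy⟩ := Metric.exists_edist_lt_of_hausdorffEDist_lt (s := (S : Set U)) hx h2
    exact ⟨y, hy, conv _ _ hxy⟩
  · intro y hy
    rw [Metric.hausdorffEDist_comm] at h2
    obtain ⟨x, hx, hxy⟩ := Metric.exists_edist_lt_of_hausdorffEDist_lt (s := (A : Set U)) hy h2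
    rw [edist_comm] at hxy
    exact ⟨x, hx, conv _ _ hxy⟩

theorem bdist_lt {U : Type*} [MetricSpace U] {x y : U} {r : ℝ} (hr : r ≤ 1)
    (h : bdist x y < r) : dist x y < r := by
  unfold bdist at h
  rcases min_lt_iff.1 h with h1 | h1
  · linarith
  · exact h1

/-- Pointwise successive selection. -/
theorem pointwise_sel {U : Type*} [MetricSpace U] [CompleteSpace U] (S : Closeds U)
    (hS : (S : Set U).Nonempty) (x : U) (ρ0 : ℝ) (h0 : 0 < ρ0) (h1 : ρ0 ≤ 1)
    (A : ℕ → Closeds U) (y : ℕ → U)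
    (hA : ∀ n, clDist S (A n) < ρ0 / 2 ^ n) (hy : bdist x (y 0) < ρ0)
    (f : ℕ → U)
    (hf0 : (A 0 : Set U).Nonempty → f 0 ∈ A 0 ∧
      dist (f 0) (y 0) < Metric.infDist (y 0) (A 0) + ρ0)
    (hfs : ∀ n, (∃ z ∈ A (n + 1), dist (f n) z < 2 * (ρ0 / 2 ^ n)) →
      f (n + 1) ∈ A (n + 1) ∧ dist (f n) (f (n + 1)) < 2 * (ρ0 / 2 ^ n)) :
    ∃ l ∈ S, Tendsto f atTop (𝓝 l) ∧ (∀ n, dist (f n) l ≤ 4 * ρ0 / 2 ^ n) ∧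
      dist l x < Metric.infDist x S + 9 * ρ0 := by
  have hle : ∀ n : ℕ, ρ0 / 2 ^ n ≤ 1 := fun n =>
    (div_le_self h0.le (one_le_pow₀ one_le_two)).trans h1
  have hAB := fun n => clDist_lt (hle n) (hA n)
  obtain ⟨s0, hs0⟩ := hS
  obtain ⟨a0, ha0, -⟩ := (hAB 0).1 s0 hs0
  obtain ⟨hf0A, hf0d⟩ := hf0 ⟨a0, ha0⟩
  have step : ∀ n, f n ∈ A n → f (n + 1) ∈ A (n + 1) ∧
      dist (f n) (f (n + 1)) < 2 * (ρ0 / 2 ^ n) := by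
    intro n hn
    apply hfs
    obtain ⟨s, hs, hsd⟩ := (hAB n).2 _ hn
    obtain ⟨z, hz, hzd⟩ := (hAB (n + 1)).1 s hs
    refine ⟨z, hz, ?_⟩
    have h2 := dist_triangle_left (f n) z s
    have h3 : ρ0 / 2 ^ (n + 1) ≤ ρ0 / 2 ^ n := by
      apply div_le_div_of_nonneg_left h0.le (by positivity)
      exact pow_le_pow_right₀ one_le_two (Nat.le_succ n)
    linarith
  have hmem : ∀ n, f n ∈ A n := by
    intro n
    induction n with
    | zero => exact hf0A
    | succ k ih => exact (step k ih).1
  have hd : ∀ n, dist (f n) (f (n + 1)) ≤ 4 * ρ0 / 2 / 2 ^ n := by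
    intro n
    refine (step n (hmem n)).2.le.trans (le_of_eq ?_)
    ring
  obtain ⟨l, hl⟩ := cauchySeq_tendsto_of_complete (cauchySeq_of_le_geometric_two hd)
  have hdl := fun n => dist_le_of_le_geometric_two_of_tendsto hd hl n
  refine ⟨l, ?_, hl, hdl, ?_⟩
  · have hcl : l ∈ closure (S : Set U) := by
      rw [Metric.mem_closure_iff]
      intro ε hε
      have ht : Tendsto (fun n : ℕ => 5 * ρ0 / 2 ^ n) atTop (𝓝 0) := by
        have := (tendsto_pow_atTop_nhds_zero_of_lt_one (r := (1:ℝ) / 2) (by norm_num) (by norm_num)).const_mul (5 * ρ0)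
        simpa [div_eq_mul_inv] using this
      obtain ⟨n, hn⟩ := (ht.eventually_lt_const hε).exists
      obtain ⟨s, hs, hsd⟩ := (hAB n).2 _ (hmem n)
      refine ⟨s, hs, ?_⟩
      have h2 := dist_triangle_left l s (f n)
      rw [dist_comm s] at hsd
      have h3 := hdl n
      have h4 : 4 * ρ0 / 2 ^ n + ρ0 / 2 ^ n = 5 * ρ0 / 2 ^ n := by ring
      linarith
    rwa [S.isClosed.closure_eq] at hcl
  · obtain ⟨s, hs, hsd⟩ := (Metric.infDist_lt_iff (x := x) (s := (S : Set U))
      (r := Metric.infDist x S + ρ0) ⟨s0, hs0⟩).1 (by linarith)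
    obtain ⟨a, ha, had⟩ := (hAB 0).1 s hs
    have h2 := Metric.infDist_le_dist_of_mem (x := y 0) (s := (A 0 : Set U)) ha
    have h3 := bdist_lt h1 hy
    have h4 := hdl 0
    simp only [pow_zero, div_one] at had h4
    have h5 := dist_triangle4 (y 0) x s a
    rw [dist_comm (y 0) x] at h5
    have h6 := dist_triangle4 l (f 0) (y 0) x
    rw [dist_comm l (f 0), dist_comm (y 0) x] at h6
    linarith


/-- Functions taking countably many values along an admissible index. -/
def IdxRep {U : Type*} (𝓕 : Filter ℝ) (u : ℝ → U) : Prop :=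
  ∃ (H : ℕ → U) (e : ℝ → ℕ), IdxOK 𝓕 e ∧ ∀ t, u t = H (e t)

theorem limit_props {U : Type*} [MetricSpace U] (x₀ : U) (𝓕 : Filter ℝ)
    (hR : ∀ s ∈ 𝓕, RelDense s) (fn : ℕ → ℝ → U) (hrep : ∀ n, IdxRep 𝓕 (fn n)) (f : ℝ → U) (C : ℝ)
    (hlim : ∀ᵐ t ∂(volume : Measure ℝ), Tendsto (fun n => fn n t) atTop (𝓝 (f t)))
    (hd : ∀ᵐ t ∂(volume : Measure ℝ), ∀ n, dist (fn n t) (f t) ≤ C / 2 ^ n) :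
    MemWpTilde bdist 1 x₀ f ∧ ∀ ε > 0, APeriods bdist 1 ε f ∈ 𝓕 := by
  have hCn : ∀ ε > 0, ∃ n : ℕ, C / 2 ^ n < ε := by
    intro ε hε
    have ht : Tendsto (fun n : ℕ => C / 2 ^ n) atTop (𝓝 0) := by
      have := (tendsto_pow_atTop_nhds_zero_of_lt_one (r := (1:ℝ) / 2) (by norm_num)
        (by norm_num)).const_mul C
      simpa [div_eq_mul_inv] using this
    exact (ht.eventually_lt_const hε).exists
  have hAP : ∀ ε > 0, APeriods bdist 1 ε f ∈ 𝓕 := by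
    intro ε hε
    obtain ⟨n, hn⟩ := hCn (ε / 4) (by positivity)
    obtain ⟨H, e, he, hHe⟩ := hrep n
    have h1 := he.ap.eventually_lt_const (ENNReal.ofReal_pos.2 (half_pos hε))
    filter_upwards [h1] with τ hτ
    have h2 : weylDinf bdist 1 f (fun t => f (t + τ)) ≤
        ENNReal.ofReal (ε / 2) + kappaW {t | e (t + τ) ≠ e t} := by
      apply weylDinf_le
      · intro x y; exact min_le_left _ _
      · have hd' : ∀ᵐ t ∂(volume : Measure ℝ), ∀ n, dist (fn n (t + τ)) (f (t + τ)) ≤ C / 2 ^ n :=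
          (quasiMeasurePreserving_add_right (volume : Measure ℝ) τ).ae hd
        filter_upwards [hd, hd'] with t ht ht' hts
        have hts' : e (t + τ) = e t := not_not.1 hts
        refine (min_le_right _ _).trans ?_
        have e1 : fn n (t + τ) = fn n t := by rw [hHe, hHe, hts']
        have h3 := ht n
        have h4 := ht' n
        rw [e1] at h4
        have h5 := dist_triangle_left (f t) (f (t + τ)) (fn n t)
        linarith
    show weylDinf bdist 1 f (fun t => f (t + τ)) < ENNReal.ofReal ε
    refine lt_of_le_of_lt h2 ?_
    rw [show ε = ε / 2 + ε / 2 by ring, ENNReal.ofReal_add (by positivity) (by positivity),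
      ← show ε = ε / 2 + ε / 2 by ring]
    exact ENNReal.add_lt_add_left ENNReal.ofReal_ne_top hτ
  refine ⟨⟨⟨?_, 1, ?_⟩, fun ε hε => hR _ (hAP ε hε), ?_⟩, hAP⟩
  · refine aestronglyMeasurable_of_tendsto_ae atTop (f := fn) (fun n => ?_) hlim
    obtain ⟨H, e, he, hHe⟩ := hrep n
    have : fn n = fun t => H (e t) := funext hHe
    rw [this]
    exact (StronglyMeasurable.of_discrete.comp_measurable he.meas).aestronglyMeasurable
  · intro ξ
    calc (∫⁻ t in Set.Icc ξ (ξ + 1), ENNReal.ofReal (bdist (f t) x₀ ^ (1:ℝ)))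
        ≤ ∫⁻ t in Set.Icc ξ (ξ + 1), 1 := by
          apply lintegral_mono
          intro t
          simp [bdist]
      _ ≤ _ := by simp
  · intro ε hε η hη
    obtain ⟨n, hn⟩ := hCn ε hε
    obtain ⟨H, e, he, hHe⟩ := hrep n
    obtain ⟨N, hN⟩ := he.tail (η / 2) (half_pos hη)
    refine ⟨H '' Set.Iio N, ((Set.finite_Iio N).image H).isCompact, ?_⟩
    refine lt_of_le_of_lt ?_ ((ENNReal.ofReal_lt_ofReal_iff hη).2 (half_lt_self hη))
    refine le_trans (kappaW_mono_ae ?_) hN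
    filter_upwards [hd] with t ht h1
    by_contra h2
    have h3 : e t < N := not_le.1 h2
    have h4 : dInfDist bdist (f t) (H '' Set.Iio N) ≤ ENNReal.ofReal (bdist (f t) (H (e t))) :=
      iInf₂_le (H (e t)) ⟨e t, h3, rfl⟩
    have h5 : bdist (f t) (H (e t)) < ε := by
      refine lt_of_le_of_lt (min_le_right _ _) ?_
      rw [← hHe, dist_comm]
      exact lt_of_le_of_lt (ht n) hn
    exact absurd (le_trans (show ENNReal.ofReal ε ≤ _ from h1) h4)
      (not_le.2 ((ENNReal.ofReal_lt_ofReal_iff hε).2 h5))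

open TopologicalSpace in
/-- **Theorem 3 (selection theorem for `W̃(ℝ,U)`).**
Let `(U,ρ)` be a complete metric space, `g ∈ W̃(ℝ,U)`,
`F ∈ W̃₁(ℝ, (cl U, dist_{ρ'}))`, and suppose that
`𝒯(ε) = P^{(ρ')}₁(ε; g) ∩ P^{(dist_{ρ'})}₁(ε; F)` is relatively dense for every `ε > 0`.
Then for every `δ > 0` and every `h ∈ W₁(ℝ,ℝ)` with dense countable frequency module
there is `f_δ ∈ W̃(ℝ,U)` with `f_δ(t) ∈ F(t)` a.e.,
`ρ(f_δ(t), g(t)) < ρ(g(t), F(t)) + δ` a.e., and such that for every `ε' > 0` there is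
`ε > 0` with `P^{(ρ')}₁(ε'; f_δ) ⊇ 𝒯(ε) ∩ P^{(ρ_ℝ)}₁(ε; h)`. -/
theorem weyl_tilde_selection {U : Type*} [MetricSpace U] [CompleteSpace U] (x₀ : U)
    (g : ℝ → U) (hg : MemWpTilde bdist 1 x₀ g)
    (F : ℝ → Closeds U) (hFne : ∀ t : ℝ, (F t : Set U).Nonempty)
    (hF : MemWpTilde clDist 1 (⟨{x₀}, isClosed_singleton⟩ : Closeds U) F)
    (hT : ∀ ε > (0 : ℝ), RelDense (APeriods bdist 1 ε g ∩ APeriods clDist 1 ε F))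
    (δ : ℝ) (hδ : 0 < δ)
    (h : ℝ → ℝ) (hh : MemWp dist 1 (0 : ℝ) h)
    (hhdense : Dense (WMod bdist h)) (hhcount : (WMod bdist h).Countable) :
    ∃ f : ℝ → U, MemWpTilde bdist 1 x₀ f ∧
      (∀ᵐ t ∂(volume : Measure ℝ), f t ∈ (F t : Set U)) ∧
      (∀ᵐ t ∂(volume : Measure ℝ),
        dist (f t) (g t) < Metric.infDist (g t) (F t) + δ) ∧
      (∀ ε' > (0 : ℝ), ∃ ε > (0 : ℝ),
        (APeriods bdist 1 ε g ∩ APeriods clDist 1 ε F) ∩ APeriods bdist 1 ε h ⊆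
          APeriods bdist 1 ε' f) := by
  obtain ⟨F', hF'm, hFF⟩ := hF.1.1
  obtain ⟨g', hg'm, hgg⟩ := hg.1.1
  have hdF : BddDist (clDist : Closeds U → Closeds U → ℝ) := bddDist_clDist
  have hdg : BddDist (bdist : U → U → ℝ) := bddDist_bdist
  obtain ⟨𝓕, hR, hΛF, hψ, h𝓕⟩ := exists_filter
    (fun t s => clDist (F' t) (F' s) + bdist (g' t) (g' s))
    (fun t s => by rw [hdF.symm (F' t), hdg.symm (g' t)])
    (fun a b c => by
      have h1 := hdF.triangle (F' a) (F' b) (F' c)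
      have h2 := hdg.triangle (g' a) (g' b) (g' c)
      linarith)
    (fun ε => APeriods bdist 1 ε g ∩ APeriods clDist 1 ε F) hT
    (fun ε ε' hh τ hτ => ⟨lt_of_lt_of_le hτ.1 (ENNReal.ofReal_le_ofReal hh),
      lt_of_lt_of_le hτ.2 (ENNReal.ofReal_le_ofReal hh)⟩)
    (fun ε hε => by
      refine ⟨ε / 2 * (ε / 2), by positivity, fun τ hτ => ?_⟩
      have h1 := cheb bdist hdg g g' hg'm hgg (half_pos hε) hτ.1
      have h2 := cheb clDist hdF F F' hF'm hFF (half_pos hε) hτ.2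
      show kappaW _ < _
      have h3 := ENNReal.add_lt_add h1 h2
      rw [← ENNReal.ofReal_add (by positivity) (by positivity), add_halves] at h3
      refine lt_of_le_of_lt (kappaW_le_add fun t ht => ?_) h3
      by_contra hc
      push Not at hc
      have c1 : bdist (g' t) (g' (t + τ)) < ε / 2 := not_le.1 hc.1
      have c2 : clDist (F' t) (F' (t + τ)) < ε / 2 := not_le.1 hc.2
      have c3 : ε ≤ clDist (F' t) (F' (t + τ)) + bdist (g' t) (g' (t + τ)) := ht
      linarith) h
  have hΛ : ∀ c > 0, ∃ lam ∈ {lam : ℝ | 2 * Real.pi * lam ∈ WMod bdist h}, 0 < lam ∧ lam < c := by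
    intro c hc
    have hpi := Real.pi_pos
    obtain ⟨m, hm, hm1, hm2⟩ := hhdense.exists_between (show (0:ℝ) < 2 * Real.pi * c by positivity)
    refine ⟨m / (2 * Real.pi), ?_, by positivity, ?_⟩
    · show 2 * Real.pi * (m / (2 * Real.pi)) ∈ WMod bdist h
      rwa [mul_div_cancel₀ _ (by positivity)]
    · rw [div_lt_iff₀ (by positivity)]
      linarith
  obtain ⟨A, hA, hA'⟩ := exists_seq_tail clDist hdF F F' hF'm hFF hF.2.2
  obtain ⟨y, hy, hy'⟩ := exists_seq_tail bdist hdg g g' hg'm hgg hg.2.2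
  obtain ⟨ρ0, hρ0, hρ1, hρδ⟩ : ∃ ρ0 : ℝ, 0 < ρ0 ∧ ρ0 ≤ 1 ∧ 9 * ρ0 ≤ δ := by
    refine ⟨min 1 (δ / 9), by positivity, min_le_left _ _, ?_⟩
    have := min_le_right 1 (δ / 9)
    linarith
  choose c hcok hc using fun n : ℕ => exists_index2 clDist bdist hdF hdg F' g' hF'm hg'm 𝓕 hR _ hΛ hΛF
    hψ A y hA hA' hy hy' (ρ0 / 2 ^ n) (by positivity)
  have hG0 : ∀ i : ℕ, ∃ x : U, (A i.unpair.1 : Set U).Nonempty → x ∈ A i.unpair.1 ∧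
      dist x (y i.unpair.2) < Metric.infDist (y i.unpair.2) (A i.unpair.1) + ρ0 := by
    intro i
    by_cases hne : (A i.unpair.1 : Set U).Nonempty
    · obtain ⟨x, hx, hxd⟩ := (Metric.infDist_lt_iff (x := y i.unpair.2)
        (r := Metric.infDist (y i.unpair.2) (A i.unpair.1) + ρ0) hne).1 (by linarith)
      exact ⟨x, fun _ => ⟨hx, by rwa [dist_comm]⟩⟩
    · exact ⟨x₀, fun h' => absurd h' hne⟩
  choose G0 hG0 using hG0
  have hGs : ∀ (n : ℕ) (x : U) (i : ℕ), ∃ x' : U,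
      (∃ z ∈ A i.unpair.1, dist x z < 2 * (ρ0 / 2 ^ n)) →
      x' ∈ A i.unpair.1 ∧ dist x x' < 2 * (ρ0 / 2 ^ n) := by
    intro n x i
    by_cases hex : ∃ z ∈ A i.unpair.1, dist x z < 2 * (ρ0 / 2 ^ n)
    · obtain ⟨z, hz⟩ := hex
      exact ⟨z, fun _ => hz⟩
    · exact ⟨x₀, fun h' => absurd h' hex⟩
  choose Gs hGs using hGs
  let fn : ℕ → ℝ → U := fun n => Nat.rec (fun t => G0 (c 0 t))
    (fun n p t => Gs n (p t) (c (n + 1) t)) n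
  have hfn0 : ∀ t, fn 0 t = G0 (c 0 t) := fun t => rfl
  have hfns : ∀ n t, fn (n + 1) t = Gs n (fn n t) (c (n + 1) t) := fun n t => rfl
  have hrep : ∀ n, IdxRep 𝓕 (fn n) := by
    intro n
    induction n with
    | zero => exact ⟨G0, c 0, hcok 0, hfn0⟩
    | succ n ih =>
      obtain ⟨H, e, he, hHe⟩ := ih
      refine ⟨fun k => Gs n (H k.unpair.1) k.unpair.2, fun t => Nat.pair (e t) (c (n + 1) t),
        he.pair (hcok (n + 1)), fun t => ?_⟩
      rw [hfns, hHe]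
      simp only [Nat.unpair_pair]
  have hpt : ∀ t, ∃ l : U, F t = F' t → g t = g' t →
      (l ∈ F t ∧ Tendsto (fun n => fn n t) atTop (𝓝 l) ∧
        (∀ n, dist (fn n t) l ≤ 4 * ρ0 / 2 ^ n) ∧
        dist l (g t) < Metric.infDist (g t) (F t) + 9 * ρ0) := by
    intro t
    by_cases hcond : F t = F' t ∧ g t = g' t
    · obtain ⟨h1, h2⟩ := hcond
      obtain ⟨l, hl⟩ := pointwise_sel (F t) (hFne t) (g t) ρ0 hρ0 hρ1
        (fun n => A (c n t).unpair.1) (fun n => y (c n t).unpair.2)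
        (fun n => by
          have h3 := hc n t
          have h4 := hdg.nonneg (g' t) (y (c n t).unpair.2)
          rw [h1]; linarith)
        (by
          have h3 := hc 0 t
          have h4 := hdF.nonneg (F' t) (A (c 0 t).unpair.1)
          rw [h2]
          simp only [pow_zero, div_one] at h3
          linarith)
        (fun n => fn n t) (hG0 (c 0 t)) (fun n => hGs n (fn n t) (c (n + 1) t))
      exact ⟨l, fun _ _ => hl⟩
    · exact ⟨x₀, fun h1 h2 => absurd ⟨h1, h2⟩ hcond⟩
  choose f hf using hpt
  have hae : ∀ᵐ t ∂(volume : Measure ℝ), (f t ∈ F t ∧ Tendsto (fun n => fn n t) atTop (𝓝 (f t)) ∧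
        (∀ n, dist (fn n t) (f t) ≤ 4 * ρ0 / 2 ^ n) ∧
        dist (f t) (g t) < Metric.infDist (g t) (F t) + 9 * ρ0) := by
    filter_upwards [hFF, hgg] with t h1 h2
    exact hf t h1 h2
  obtain ⟨hW, hAP⟩ := limit_props x₀ 𝓕 hR fn hrep f (4 * ρ0)
    (hae.mono fun t ht => ht.2.1) (hae.mono fun t ht => ht.2.2.1)
  refine ⟨f, hW, hae.mono fun t ht => ht.1, hae.mono fun t ht => ?_, fun ε' hε' => ?_⟩
  · exact lt_of_lt_of_le ht.2.2.2 (by linarith)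
  · exact h𝓕 _ (hAP ε' hε')
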